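/- arXiv:1608.03860 — 2 statements merged into one kernel-verified Lean document; each statement's English description precedes it below -/
import Mathlib

section
/- Let S be a finite set and (W_n)_{n≥1} a sequence of S-colored graphons. Then the following are equivalent: (i) the sequence left-converges, i.e. for every S-colored finite simple graph H the sequence of colored homomorphism densities t_S(H, W_n) converges in ℝ; (ii) (W_n) is a Cauchy sequence with respect to the metric δ_□^S. -/
open MeasureTheory Set Filter
open scoped symmDiff

noncomputable section

/-- The unit interval `[0,1]` as a subset of `ℝ`. -/
def I01 : Set ℝ := Set.Icc 0 1

/-- A graphon: a symmetric measurable kernel with values in `[0,1]`. -/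
structure Graphon where
  W : ℝ → ℝ → ℝ
  measurable : Measurable (Function.uncurry W)
  symm : ∀ x y, W x y = W y x
  nonneg : ∀ x y, 0 ≤ W x y
  le_one : ∀ x y, W x y ≤ 1

/-- The cut norm `‖U‖_□` of a kernel `U`. -/
def cutNorm (U : ℝ → ℝ → ℝ) : ℝ :=
  sSup { r | ∃ A B : Set ℝ, MeasurableSet A ∧ MeasurableSet B ∧ A ⊆ I01 ∧ B ⊆ I01 ∧
    r = |∫ x in A, ∫ y in B, U x y| }

/-- A measure-preserving bijection of `[0,1]`. -/
def IsMPB (σ : ℝ → ℝ) : Prop :=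
  Measurable σ ∧ Set.BijOn σ I01 I01 ∧
    MeasurePreserving σ (volume.restrict I01) (volume.restrict I01)

/-- An `S`-colored graphon: a graphon together with a coloring `c : [0,1] → S` with
measurable color classes. -/
structure CGraphon (S : Type*) where
  K : Graphon
  c : ℝ → S
  measC : ∀ s : S, MeasurableSet (c ⁻¹' {s})

/-- The color part of the colored cut distance:
`Σ_{s ∈ S} μ(c⁻¹(s) Δ c'⁻¹(s))` (color classes as subsets of `[0,1]`). -/
def colorDist {S : Type*} [Fintype S] (c c' : ℝ → S) : ℝ :=
  ∑ s : S, (volume ((I01 ∩ c ⁻¹' {s}) ∆ (I01 ∩ c' ⁻¹' {s}))).toReal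

/-- The colored cut distance `δ_□^S(W, W') = inf_σ ‖W − (W')^σ‖_□^S`, the infimum running
over measure-preserving bijections `σ` of `[0,1]`. -/
def deltaCutS {S : Type*} [Fintype S] (W W' : CGraphon S) : ℝ :=
  sInf { r | ∃ σ, IsMPB σ ∧
    r = cutNorm (fun x y => W.K.W x y - W'.K.W (σ x) (σ y))
        + colorDist W.c fun y => W'.c (σ y) }

/-- The colored homomorphism density `t_S(H, W)` of an `S`-colored finite simple graph
`(H, c_H)` in an `S`-colored graphon `W`. -/
def tS {V : Type} [Fintype V] [DecidableEq V] (H : SimpleGraph V) [DecidableRel H.Adj]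
    {S : Type*} [DecidableEq S] (cH : V → S) (W : CGraphon S) : ℝ :=
  ∫ x : V → ℝ,
    ((∏ e ∈ H.edgeFinset,
        Sym2.lift ⟨fun u w => W.K.W (x u) (x w), fun _ _ => W.K.symm _ _⟩ e) *
      ∏ v : V, (if W.c (x v) = cH v then (1 : ℝ) else 0))
    ∂(Measure.pi fun _ => volume.restrict I01)

/-!
A Cauchy sequence left-converges by the colored counting lemma `CGraphon.abs_hom_sub_le`. The cut
norm bounds integrals against products of `[0,1]`-valued test functions in separate variables, so
replacing the kernel in one edge factor costs at most the cut norm: once all variables but the two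
ends of the edge are frozen, the other factors form such a product. Replacing the coloring at one
vertex costs at most the measure of the set where the colorings disagree. As homomorphism densities
are invariant under measure-preserving maps, they are Lipschitz for the colored cut distance.

The converse rests on `WGraph.finite_inverse_counting`: two weighted colored graphs on `k * m`
vertices whose densities of colored graphs on `k` vertices almost agree are close in cut norm after
a permutation. Draw `k` vertices of such a graph at random and turn the weights between them into
random edges. The distribution of this sample is determined by the densities through
inclusion–exclusion (`WGraph.sampleProb_eq_sum_hom`), so the two graphs have nearly equal sample
distributions. With probability at least `3/4` the blow-up of the sample by `m` is close to a
permutation of the graph it came from (`WGraph.exists_sample_size`); hence some outcome is close to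
both graphs.

Closeness of samples comes from weak regularity with a bounded number of parts refining the color
classes (`StepApprox.weak_regularity`). The weights are replaced by a step function; the difference
between the sample and the sampled step function has small expected four-cycle sum, and four-cycles
control the cut norm (`cutLe_sqrt_sqrt_fourCycle`). By a second moment bound the sample visits the
parts with almost the right frequencies (`expect_partDeviation_sq_le`), so the vertices can be
matched to the blow-up preserving the parts (`StepApprox.close_sample`).

Graphons are approximated, the kernel in `L¹` and the coloring in measure, by step functions on all
sufficiently fine uniform grids of `[0,1]` (`CGraphon.eventually_exists_cutDist_step_le`). Any two
members of the sequence are so approximated on one grid of `k * m` cells, the counting lemma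
transfers the densities, and the permutation given by the inverse counting lemma is realised by the
interval exchange `cellPerm`, a measure-preserving bijection of `[0,1]`.
-/

open scoped BigOperators

/-! ### The cut norm of a finite matrix -/

section FiniteCutNorm

variable {ι κ : Type*} [Fintype ι] [Fintype κ] {A B : ι → ι → ℝ} {ε ε' : ℝ}

lemma expect_mem_Icc [Nonempty ι] {f : ι → ℝ} {a b : ℝ} (hf : ∀ i, f i ∈ Icc a b) :
    𝔼 i, f i ∈ Icc a b :=
  ⟨Finset.le_expect Finset.univ_nonempty fun i _ => (hf i).1,
    Finset.expect_le Finset.univ_nonempty fun i _ => (hf i).2⟩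

lemma sq_expect_mul_le {a f : ι → ℝ} (ha : ∀ i, |a i| ≤ 1) :
    (𝔼 i, a i * f i) ^ 2 ≤ 𝔼 i, f i ^ 2 := by
  have ha_sq : 𝔼 i, a i ^ 2 ≤ 1 := by
    rcases isEmpty_or_nonempty ι
    · simp
    · exact Finset.expect_le Finset.univ_nonempty fun i _ => (sq_le_one_iff_abs_le_one _).2 (ha i)
  calc (𝔼 i, a i * f i) ^ 2 ≤ (𝔼 i, a i ^ 2) * 𝔼 i, f i ^ 2 :=
        Finset.expect_mul_sq_le_sq_mul_sq _ _ _
    _ ≤ 𝔼 i, f i ^ 2 :=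
        mul_le_of_le_one_left (Finset.expect_nonneg fun i _ => sq_nonneg (f i)) ha_sq

/-- `CutLe A ε` says that the normalised cut norm of the matrix `A` is at most `ε`. The test
vectors range over `[-1,1]` instead of `{0,1}`; this changes the norm by at most a factor `4`
and makes the class of test vectors closed under the products that occur in four-cycles. -/
def CutLe (A : ι → ι → ℝ) (ε : ℝ) : Prop :=
  ∀ a b : ι → ℝ, (∀ i, |a i| ≤ 1) → (∀ i, |b i| ≤ 1) → |𝔼 i, 𝔼 j, a i * b j * A i j| ≤ ε

lemma CutLe.mono (h : CutLe A ε) (hε : ε ≤ ε') : CutLe A ε' :=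
  fun a b ha hb => (h a b ha hb).trans hε

lemma CutLe.add (hA : CutLe A ε) (hB : CutLe B ε') :
    CutLe (fun i j => A i j + B i j) (ε + ε') := fun a b ha hb => by
  simp only [mul_add, Finset.expect_add_distrib]
  exact (abs_add_le _ _).trans (add_le_add (hA a b ha hb) (hB a b ha hb))

lemma CutLe.neg (h : CutLe A ε) : CutLe (fun i j => -A i j) ε := fun a b ha hb => by
  simpa only [mul_neg, Finset.expect_neg_distrib, abs_neg] using h a b ha hb

lemma CutLe.comp_equiv (h : CutLe A ε) (e : κ ≃ ι) : CutLe (fun i j => A (e i) (e j)) ε :=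
  fun a b ha hb => by
  have h_symm := h (a ∘ e.symm) (b ∘ e.symm) (fun i => ha _) fun i => hb _
  rwa [← Fintype.expect_equiv e (fun i => 𝔼 j, a i * b j * A (e i) (e j)) _ fun i =>
    Fintype.expect_equiv e _ _ fun j => by simp] at h_symm

lemma CutLe.blowup [Nonempty κ] (h : CutLe A ε) :
    CutLe (fun i j : ι × κ => A i.1 j.1) ε := fun a b ha hb => by
  have abs_average_le {c : ι × κ → ℝ} (hc : ∀ i, |c i| ≤ 1) (v : ι) : |𝔼 l, c (v, l)| ≤ 1 :=
    (Finset.abs_expect_le _ _).trans (Finset.expect_le Finset.univ_nonempty fun l _ => hc _)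
  convert h (fun v => 𝔼 l, a (v, l)) (fun v => 𝔼 l, b (v, l)) (abs_average_le ha)
    (abs_average_le hb) using 2
  simp only [← Finset.univ_product_univ, Finset.expect_product, Finset.expect_mul,
    Finset.mul_expect]
  refine Finset.expect_congr rfl fun v _ => ?_
  rw [Finset.expect_comm]
  exact Finset.expect_congr rfl fun v' _ => Finset.expect_comm _ _ _

lemma cutLe_of_expect_abs_le (h : 𝔼 i, 𝔼 j, |A i j| ≤ ε) : CutLe A ε := fun a b ha hb => by
  refine le_trans ?_ h
  refine (Finset.abs_expect_le _ _).trans (Finset.expect_le_expect fun i _ => ?_)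
  refine (Finset.abs_expect_le _ _).trans (Finset.expect_le_expect fun j _ => ?_)
  rw [abs_mul, abs_mul]
  exact mul_le_of_le_one_left (abs_nonneg _) (mul_le_one₀ (ha i) (abs_nonneg _) (hb j))

/-- The density of four-cycles in the real-valued matrix `A`. -/
def fourCycle (A : ι → ι → ℝ) : ℝ :=
  𝔼 i, 𝔼 i', 𝔼 j, 𝔼 j', A i j * A i' j * A i j' * A i' j'

lemma fourCycle_eq_expect_sq (A : ι → ι → ℝ) :
    fourCycle A = 𝔼 i, 𝔼 i', (𝔼 j, A i j * A i' j) ^ 2 := by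
  simp only [fourCycle, sq, Finset.expect_mul_expect, mul_assoc]

lemma fourCycle_eq_expect_sq_transpose (A : ι → ι → ℝ) :
    fourCycle A = 𝔼 j, 𝔼 j', (𝔼 i, A i j * A i j') ^ 2 := by
  calc fourCycle A = 𝔼 i, 𝔼 j, 𝔼 i', 𝔼 j', A i j * A i' j * A i j' * A i' j' :=
        Finset.expect_congr rfl fun i _ => Finset.expect_comm _ _ _
    _ = 𝔼 j, 𝔼 i, 𝔼 j', 𝔼 i', A i j * A i' j * A i j' * A i' j' := by
        rw [Finset.expect_comm]
        exact Finset.expect_congr rfl fun j _ => Finset.expect_congr rfl fun i _ =>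
          Finset.expect_comm _ _ _
    _ = 𝔼 j, 𝔼 j', 𝔼 i, 𝔼 i', A i j * A i' j * A i j' * A i' j' :=
        Finset.expect_congr rfl fun j _ => Finset.expect_comm _ _ _
    _ = 𝔼 j, 𝔼 j', (𝔼 i, A i j * A i j') ^ 2 := by
        simp only [sq, Finset.expect_mul_expect]
        exact Finset.expect_congr rfl fun j _ => Finset.expect_congr rfl fun j' _ =>
          Finset.expect_congr rfl fun i _ => Finset.expect_congr rfl fun i' _ => by ring

lemma fourCycle_nonneg (A : ι → ι → ℝ) : 0 ≤ fourCycle A := by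
  rw [fourCycle_eq_expect_sq]
  exact Finset.expect_nonneg fun i _ => Finset.expect_nonneg fun i' _ => sq_nonneg _

lemma pow_four_expect_le_fourCycle {a b : ι → ℝ} (ha : ∀ i, |a i| ≤ 1) (hb : ∀ i, |b i| ≤ 1) :
    (𝔼 i, 𝔼 j, a i * b j * A i j) ^ 4 ≤ fourCycle A := by
  have eliminate_a : (𝔼 i, 𝔼 j, a i * b j * A i j) ^ 2 ≤
      𝔼 j, b j * 𝔼 j', b j' * 𝔼 i, A i j * A i j' := by
    calc (𝔼 i, 𝔼 j, a i * b j * A i j) ^ 2 = (𝔼 i, a i * 𝔼 j, b j * A i j) ^ 2 := by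
          simp only [Finset.mul_expect, mul_assoc]
      _ ≤ 𝔼 i, (𝔼 j, b j * A i j) ^ 2 := sq_expect_mul_le ha
      _ = 𝔼 j, b j * 𝔼 j', b j' * 𝔼 i, A i j * A i j' := by
          simp only [sq, Finset.expect_mul_expect]
          simp only [Finset.mul_expect]
          rw [Finset.expect_comm]
          refine Finset.expect_congr rfl fun j _ => ?_
          rw [Finset.expect_comm]
          exact Finset.expect_congr rfl fun j' _ => Finset.expect_congr rfl fun i _ => by ring
  have eliminate_b : (𝔼 j, b j * 𝔼 j', b j' * 𝔼 i, A i j * A i j') ^ 2 ≤ fourCycle A := by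
    rw [fourCycle_eq_expect_sq_transpose]
    exact (sq_expect_mul_le hb).trans (Finset.expect_le_expect fun j _ => sq_expect_mul_le hb)
  calc (𝔼 i, 𝔼 j, a i * b j * A i j) ^ 4 = ((𝔼 i, 𝔼 j, a i * b j * A i j) ^ 2) ^ 2 := by ring
    _ ≤ (𝔼 j, b j * 𝔼 j', b j' * 𝔼 i, A i j * A i j') ^ 2 :=
        pow_le_pow_left₀ (sq_nonneg _) eliminate_a 2
    _ ≤ fourCycle A := eliminate_b

lemma cutLe_sqrt_sqrt_fourCycle (A : ι → ι → ℝ) : CutLe A √√(fourCycle A) :=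
  fun a b ha hb => by
  refine Real.le_sqrt_of_sq_le (Real.le_sqrt_of_sq_le ?_)
  rw [← pow_mul, Even.pow_abs (by decide)]
  exact pow_four_expect_le_fourCycle ha hb

lemma CutLe.fourCycle_le [Nonempty ι] (h : CutLe A ε) (hA : ∀ i j, |A i j| ≤ 1) :
    fourCycle A ≤ ε := by
  have fixed_edge (i' j' : ι) : 𝔼 i, 𝔼 j, A i j * A i' j * A i j' * A i' j' ≤ ε := by
    refine (le_abs_self _).trans (le_of_eq_of_le ?_
      (h (fun i => A i j' * A i' j') (fun j => A i' j) (fun i => ?_) (hA i')))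
    · exact congrArg _ (Finset.expect_congr rfl fun i _ => Finset.expect_congr rfl fun j _ => by
        ring)
    · rw [abs_mul]
      exact mul_le_one₀ (hA _ _) (abs_nonneg _) (hA _ _)
  calc fourCycle A = 𝔼 i', 𝔼 j', 𝔼 i, 𝔼 j, A i j * A i' j * A i j' * A i' j' := by
        rw [fourCycle, Finset.expect_comm]
        exact Finset.expect_congr rfl fun i' _ => (Finset.expect_congr rfl fun i _ =>
          Finset.expect_comm _ _ _).trans (Finset.expect_comm _ _ _)
    _ ≤ ε := Finset.expect_le Finset.univ_nonempty fun i' _ =>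
        Finset.expect_le Finset.univ_nonempty fun j' _ => fixed_edge i' j'

end FiniteCutNorm

/-! ### Labellings of finite sets -/

section Disagreement

lemma exists_perm_forall_fiber_subset_or_superset {ι Q : Type*} [Finite ι] (p q : ι → Q) :
    ∃ π : Equiv.Perm ι, ∀ s, (∀ i, q i = s → p (π i) = s) ∨ ∀ i, p (π i) = s → q i = s := by
  classical
  obtain ⟨π, π_min⟩ := Finite.exists_min fun π : Equiv.Perm ι => {i | p (π i) ≠ q i}.ncard
  refine ⟨π, fun s => ?_⟩
  by_contra! ⟨⟨i, hqi, hpi⟩, j, hpj, hqj⟩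
  -- Swapping `i` and `j` would repair the mismatch at `i` and create no new one.
  refine (π_min (π * Equiv.swap i j)).not_gt (Set.ncard_lt_ncard ?_)
  refine (Set.ssubset_iff_of_subset fun l hl => ?_).2
    ⟨i, by simpa [hqi] using hpi, by simp [hpj, hqi]⟩
  rcases eq_or_ne l i with rfl | hli
  · simpa [hqi] using hpi
  rcases eq_or_ne l j with rfl | hlj
  · simpa [hpj] using hqj.symm
  simpa [Equiv.swap_apply_of_ne_of_ne hli hlj] using hl

variable {ι κ Q R : Type*} [Fintype ι] [Fintype κ] [DecidableEq Q] [DecidableEq R]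

/-- The proportion of points at which two labellings of a finite set differ. -/
def disagreement (p q : ι → Q) : ℝ :=
  𝔼 i, if p i = q i then 0 else 1

lemma disagreement_comm (p q : ι → Q) : disagreement p q = disagreement q p := by
  simp only [disagreement, eq_comm]

lemma disagreement_triangle (p q r : ι → Q) :
    disagreement p r ≤ disagreement p q + disagreement q r := by
  simp only [disagreement, ← Finset.expect_add_distrib]
  refine Finset.expect_le_expect fun i _ => ?_
  split_ifs with hpr hpq hqr hqr <;> simp_all

lemma disagreement_comp_equiv (p q : ι → Q) (e : κ ≃ ι) :
    disagreement (p ∘ e) (q ∘ e) = disagreement p q :=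
  Fintype.expect_equiv e _ _ fun _ => rfl

lemma disagreement_comp_left_le (f : Q → R) (p q : ι → Q) :
    disagreement (f ∘ p) (f ∘ q) ≤ disagreement p q :=
  Finset.expect_le_expect fun i _ => by
    by_cases h : p i = q i
    · simp [h]
    · rw [if_neg h]
      split_ifs <;> simp

lemma exists_perm_disagreement_le [Fintype Q] (p q : ι → Q) :
    ∃ π : Equiv.Perm ι, disagreement (p ∘ π) q ≤
      ∑ s, |(𝔼 i, if p i = s then (1 : ℝ) else 0) - 𝔼 i, if q i = s then (1 : ℝ) else 0| := by
  obtain ⟨π, hπ⟩ := exists_perm_forall_fiber_subset_or_superset p q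
  have mismatch_le (s : Q) : (𝔼 i, if q i = s ∧ p (π i) ≠ s then (1 : ℝ) else 0) ≤
      |(𝔼 i, if p i = s then (1 : ℝ) else 0) - 𝔼 i, if q i = s then (1 : ℝ) else 0| := by
    rcases hπ s with h | h
    · refine le_of_eq_of_le (Finset.expect_eq_zero fun i _ => if_neg ?_) (abs_nonneg _)
      exact fun hi => hi.2 (h i hi.1)
    · refine le_of_eq_of_le ?_ ((le_abs_self _).trans_eq (abs_sub_comm _ _))
      rw [← Fintype.expect_equiv π (fun i => if p (π i) = s then (1 : ℝ) else 0)
        (fun i => if p i = s then (1 : ℝ) else 0) fun _ => rfl, ← Finset.expect_sub_distrib]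
      refine Finset.expect_congr rfl fun i _ => ?_
      have := h i
      split_ifs <;> simp_all
  refine ⟨π, le_of_eq_of_le ?_ (Finset.sum_le_sum fun s _ => mismatch_le s)⟩
  rw [← Finset.expect_sum_comm]
  refine Finset.expect_congr rfl fun i _ => ?_
  simp only [ite_and, Finset.sum_ite_eq, Finset.mem_univ, if_true, ne_eq, ite_not,
    Function.comp_apply]

lemma cutLe_step_sub {u : Q → Q → ℝ} (hu : ∀ s t, u s t ∈ Icc (0 : ℝ) 1) (p q : ι → Q) :
    CutLe (fun i j => u (p i) (p j) - u (q i) (q j)) (2 * disagreement p q) := by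
  have pointwise (i j : ι) : |u (p i) (p j) - u (q i) (q j)| ≤
      (if p i = q i then 0 else 1) + if p j = q j then 0 else 1 := by
    have := abs_sub_le_of_nonneg_of_le (hu (p i) (p j)).1 (hu (p i) (p j)).2
      (hu (q i) (q j)).1 (hu (q i) (q j)).2
    split_ifs with hi hj <;> simp_all
    linarith
  refine cutLe_of_expect_abs_le ?_
  rcases isEmpty_or_nonempty ι
  · simp [disagreement]
  calc 𝔼 i, 𝔼 j, |u (p i) (p j) - u (q i) (q j)|
      ≤ 𝔼 i, 𝔼 j, ((if p i = q i then (0 : ℝ) else 1) + if p j = q j then 0 else 1) :=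
        Finset.expect_le_expect fun i _ => Finset.expect_le_expect fun j _ => pointwise i j
    _ = 2 * disagreement p q := by
        simp only [Finset.expect_add_distrib, Fintype.expect_const, disagreement]
        ring

end Disagreement

/-! ### Finite weighted colored graphs -/

/-- A vertex-colored graph on `ι` with symmetric edge weights in `[0,1]` (loops allowed): the
finite counterpart of a colored graphon. -/
structure WGraph (ι S : Type*) where
  w : ι → ι → ℝ
  symm : ∀ i j, w i j = w j i
  mem_Icc : ∀ i j, w i j ∈ Icc (0 : ℝ) 1
  c : ι → S

namespace WGraph

variable {ι κ S V : Type*}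

/-- The pullback of a weighted colored graph along a map of vertex sets. -/
def comap (G : WGraph ι S) (f : κ → ι) : WGraph κ S where
  w i j := G.w (f i) (f j)
  symm i j := G.symm (f i) (f j)
  mem_Icc i j := G.mem_Icc (f i) (f j)
  c := G.c ∘ f

/-- The simple graph with edge set `T`, colored by `cT`, as a weighted graph. -/
def ofEdges [DecidableEq V] (T : Finset (Sym2 V)) (cT : V → S) : WGraph V S where
  w i j := if s(i, j) ∈ T then 1 else 0
  symm i j := by rw [Sym2.eq_swap]
  mem_Icc i j := by split_ifs <;> simp
  c := cT

section Close

variable [Fintype ι] [Fintype κ] [DecidableEq S] {G G' G'' : WGraph ι S} {ε ε' : ℝ}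

/-- `G` and `G'` are within `ε` of each other, both in cut norm and in the proportion of
differently colored vertices, after a permutation of the vertices. -/
def Close (G G' : WGraph ι S) (ε : ℝ) : Prop :=
  ∃ π : Equiv.Perm ι,
    CutLe (fun i j => G.w (π i) (π j) - G'.w i j) ε ∧ disagreement (G.c ∘ π) G'.c ≤ ε

lemma Close.mono (h : G.Close G' ε) (hε : ε ≤ ε') : G.Close G' ε' :=
  let ⟨π, hw, hc⟩ := h
  ⟨π, hw.mono hε, hc.trans hε⟩

lemma Close.symm (h : G.Close G' ε) : G'.Close G ε := by
  obtain ⟨π, hw, hc⟩ := h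
  refine ⟨π.symm, ?_, ?_⟩
  · simpa using (hw.comp_equiv π.symm).neg
  · rwa [disagreement_comm, ← disagreement_comp_equiv _ _ π, Function.comp_assoc,
      Equiv.symm_comp_self, Function.comp_id]

lemma Close.trans (h : G.Close G' ε) (h' : G'.Close G'' ε') : G.Close G'' (ε + ε') := by
  obtain ⟨π, hw, hc⟩ := h
  obtain ⟨π', hw', hc'⟩ := h'
  refine ⟨π * π', ?_, ?_⟩
  · simpa using (hw.comp_equiv π').add hw'
  · refine (disagreement_triangle _ (G'.c ∘ π') _).trans (add_le_add ?_ hc')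
    rwa [← disagreement_comp_equiv _ _ π'] at hc

lemma Close.of_comap_equiv (e : κ ≃ ι) (h : (G.comap e).Close (G'.comap e) ε) : G.Close G' ε := by
  obtain ⟨π, hw, hc⟩ := h
  refine ⟨(e.symm.trans π).trans e, ?_, ?_⟩
  · simpa [comap] using hw.comp_equiv e.symm
  · rw [← disagreement_comp_equiv _ _ e]
    simpa [comap, Function.comp_def] using hc

end Close

end WGraph

/-! ### Weak regularity -/

lemma abs_sub_projIcc_le {a b x : ℝ} (h : a ≤ b) (hx : x ∈ Icc a b) (y : ℝ) :
    |x - projIcc a b h y| ≤ |x - y| := by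
  simpa only [projIcc_of_mem h hx] using abs_projIcc_sub_projIcc h (c := x) (d := y)

/-- The sign `±1` encoded by a truth value. -/
def boolSign (b : Bool) : ℝ :=
  if b then 1 else -1

lemma boolSign_sq (b : Bool) : boolSign b ^ 2 = 1 := by
  cases b <;> simp [boolSign]

lemma boolSign_decide_mul_self (x : ℝ) : boolSign (decide (0 ≤ x)) * x = |x| := by
  by_cases hx : 0 ≤ x
  · simp [boolSign, hx, abs_of_nonneg hx]
  · simp [boolSign, hx, abs_of_neg (not_le.1 hx)]

section BoolSign

variable {ι : Type*} [Fintype ι]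

lemma abs_expect_mul_le_expect_boolSign_mul {a f : ι → ℝ} (ha : ∀ i, |a i| ≤ 1) :
    |𝔼 i, a i * f i| ≤ 𝔼 i, boolSign (decide (0 ≤ f i)) * f i := by
  refine (Finset.abs_expect_le _ _).trans (Finset.expect_le_expect fun i _ => ?_)
  rw [boolSign_decide_mul_self, abs_mul]
  exact mul_le_of_le_one_left (abs_nonneg _) (ha i)

lemma exists_boolSign_of_not_cutLe {A : ι → ι → ℝ} {ε : ℝ} (h : ¬ CutLe A ε) :
    ∃ α β : ι → Bool, ε < 𝔼 i, 𝔼 j, boolSign (α i) * boolSign (β j) * A i j := by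
  simp only [CutLe, not_forall, not_le] at h
  obtain ⟨a, b, ha, hb, hlt⟩ := h
  let α : ι → Bool := fun i => decide (0 ≤ 𝔼 j, b j * A i j)
  let β : ι → Bool := fun j => decide (0 ≤ 𝔼 i, boolSign (α i) * A i j)
  refine ⟨α, β, hlt.trans_le ?_⟩
  have rows (a b : ι → ℝ) : 𝔼 i, 𝔼 j, a i * b j * A i j = 𝔼 i, a i * 𝔼 j, b j * A i j := by
    simp only [Finset.mul_expect, mul_assoc]
  have columns (a b : ι → ℝ) : 𝔼 i, 𝔼 j, a i * b j * A i j = 𝔼 j, b j * 𝔼 i, a i * A i j := by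
    rw [Finset.expect_comm]
    simp only [Finset.mul_expect, mul_assoc, mul_left_comm]
  calc |𝔼 i, 𝔼 j, a i * b j * A i j| ≤ 𝔼 i, 𝔼 j, boolSign (α i) * b j * A i j := by
        simp only [rows]
        exact abs_expect_mul_le_expect_boolSign_mul ha
    _ ≤ 𝔼 i, 𝔼 j, boolSign (α i) * boolSign (β j) * A i j := by
        simp only [columns]
        exact (le_abs_self _).trans (abs_expect_mul_le_expect_boolSign_mul hb)

lemma exists_boolSign_expect_sq_le_of_not_cutLe [Nonempty ι] {A : ι → ι → ℝ} {ε : ℝ} (hε : 0 ≤ ε)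
    (h : ¬ CutLe A ε) : ∃ (α β : ι → Bool) (t : ℝ),
    𝔼 i, 𝔼 j, (A i j - t * (boolSign (α i) * boolSign (β j))) ^ 2 ≤
      (𝔼 i, 𝔼 j, A i j ^ 2) - ε ^ 2 := by
  obtain ⟨α, β, hlt⟩ := exists_boolSign_of_not_cutLe h
  refine ⟨α, β, 𝔼 i, 𝔼 j, boolSign (α i) * boolSign (β j) * A i j, ?_⟩
  set t := 𝔼 i, 𝔼 j, boolSign (α i) * boolSign (β j) * A i j with ht
  calc 𝔼 i, 𝔼 j, (A i j - t * (boolSign (α i) * boolSign (β j))) ^ 2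
      = 𝔼 i, 𝔼 j, (A i j ^ 2 - 2 * t * (boolSign (α i) * boolSign (β j) * A i j) + t ^ 2) := by
        refine Finset.expect_congr rfl fun i _ => Finset.expect_congr rfl fun j _ => ?_
        linear_combination t ^ 2 * (boolSign (β j) ^ 2 * boolSign_sq (α i) + boolSign_sq (β j))
    _ = (𝔼 i, 𝔼 j, A i j ^ 2) - t ^ 2 := by
        simp only [Finset.expect_add_distrib, Finset.expect_sub_distrib, ← Finset.mul_expect,
          Fintype.expect_const, ← ht]
        ring
    _ ≤ (𝔼 i, 𝔼 j, A i j ^ 2) - ε ^ 2 := by gcongr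

end BoolSign

/-- A step function with values in `[0,1]` approximating the weights of `G`. The steps are labelled
by `S × Q` and refine the color classes. -/
structure StepApprox {ι S : Type*} (G : WGraph ι S) (Q : Type*) where
  part : ι → S × Q
  part_fst : ∀ i, (part i).1 = G.c i
  weight : S × Q → S × Q → ℝ
  weight_mem_Icc : ∀ s t, weight s t ∈ Icc (0 : ℝ) 1

namespace StepApprox

variable {ι S Q : Type*} {G : WGraph ι S}

/-- The difference between the weights of the graph and the step function. -/
def residual (A : StepApprox G Q) (i j : ι) : ℝ :=
  G.w i j - A.weight (A.part i) (A.part j)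

lemma abs_residual_le_one (A : StepApprox G Q) (i j : ι) : |A.residual i j| ≤ 1 :=
  abs_sub_le_of_nonneg_of_le (G.mem_Icc i j).1 (G.mem_Icc i j).2
    (A.weight_mem_Icc _ _).1 (A.weight_mem_Icc _ _).2

variable {r : ℕ}

/-- Adding a multiple of a rank-one sign matrix to a step function. The label of a part records,
for every correction made so far, the signs of the two test vectors on that part. Truncating to
`[0,1]` keeps the approximant bounded without increasing its distance to the weights. -/
def correct (A : StepApprox G (Fin r → Bool × Bool)) (α β : ι → Bool) (t : ℝ) :
    StepApprox G (Fin (r + 1) → Bool × Bool) where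
  part i := ((A.part i).1, Fin.cons (α i, β i) (A.part i).2)
  part_fst := A.part_fst
  weight q q' := projIcc 0 1 zero_le_one (A.weight (q.1, Fin.tail q.2) (q'.1, Fin.tail q'.2) +
    t * (boolSign (q.2 0).1 * boolSign (q'.2 0).2))
  weight_mem_Icc _ _ := Subtype.property _

lemma abs_residual_correct_le (A : StepApprox G (Fin r → Bool × Bool)) (α β : ι → Bool) (t : ℝ)
    (i j : ι) : |(A.correct α β t).residual i j| ≤
      |A.residual i j - t * (boolSign (α i) * boolSign (β j))| := by
  simpa only [residual, correct, Fin.tail_cons, Fin.cons_zero, sub_sub] using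
    abs_sub_projIcc_le zero_le_one (G.mem_Icc i j) _

lemma residual_correct_zero (A : StepApprox G (Fin r → Bool × Bool)) (α β : ι → Bool) :
    (A.correct α β 0).residual = A.residual := by
  ext i j
  simp only [residual, correct, Fin.tail_cons, zero_mul, add_zero,
    projIcc_of_mem zero_le_one (A.weight_mem_Icc _ _)]

variable [Fintype ι] [Nonempty ι]

lemma exists_cutLe_or_energy_le (G : WGraph ι S) {ε : ℝ} (hε : 0 ≤ ε) (r : ℕ) :
    ∃ A : StepApprox G (Fin r → Bool × Bool),
      CutLe A.residual ε ∨ 𝔼 i, 𝔼 j, A.residual i j ^ 2 ≤ 1 - r * ε ^ 2 := by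
  induction r with
  | zero =>
    refine ⟨⟨fun i => (G.c i, Fin.elim0), fun _ => rfl, fun _ _ => 0, by simp⟩, Or.inr ?_⟩
    simp only [residual, sub_zero, Nat.cast_zero, zero_mul]
    exact Finset.expect_le Finset.univ_nonempty fun i _ =>
      Finset.expect_le Finset.univ_nonempty fun j _ =>
        pow_le_one₀ (G.mem_Icc i j).1 (G.mem_Icc i j).2
  | succ r ih =>
    obtain ⟨A, hA⟩ := ih
    by_cases hcut : CutLe A.residual ε
    · refine ⟨A.correct (fun _ => true) (fun _ => true) 0, Or.inl ?_⟩
      rwa [residual_correct_zero]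
    · obtain ⟨α, β, t, henergy⟩ := exists_boolSign_expect_sq_le_of_not_cutLe hε hcut
      refine ⟨A.correct α β t, Or.inr ?_⟩
      calc 𝔼 i, 𝔼 j, (A.correct α β t).residual i j ^ 2
          ≤ 𝔼 i, 𝔼 j, (A.residual i j - t * (boolSign (α i) * boolSign (β j))) ^ 2 :=
            Finset.expect_le_expect fun i _ => Finset.expect_le_expect fun j _ =>
              sq_le_sq.2 (A.abs_residual_correct_le α β t i j)
        _ ≤ (𝔼 i, 𝔼 j, A.residual i j ^ 2) - ε ^ 2 := henergy
        _ ≤ 1 - (r + 1 : ℕ) * ε ^ 2 := by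
            push_cast
            linarith [hA.resolve_left hcut]

lemma weak_regularity (G : WGraph ι S) {ε : ℝ} (hε : 0 ≤ ε) {r : ℕ}
    (hr : 1 < r * ε ^ 2) : ∃ A : StepApprox G (Fin r → Bool × Bool), CutLe A.residual ε := by
  obtain ⟨A, hA⟩ := exists_cutLe_or_energy_le G hε r
  refine ⟨A, hA.resolve_right fun henergy => ?_⟩
  have : 0 ≤ 𝔼 i, 𝔼 j, A.residual i j ^ 2 :=
    Finset.expect_nonneg fun i _ => Finset.expect_nonneg fun j _ => sq_nonneg _
  linarith

end StepApprox

/-! ### Random samples of a weighted graph -/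

section BernoulliSubset

variable {α κ R : Type*} [DecidableEq α] [Fintype κ] [CommRing R] {E F : Finset α}

lemma prod_indicator_sub_eq {T : Finset α} (hF : F ⊆ E) (z : α → R) :
    ∏ e ∈ F, ((if e ∈ T then 1 else 0) - z e) =
      (∏ e ∈ T, if e ∈ F then 1 - z e else 1) * ∏ e ∈ E \ T, if e ∈ F then -z e else 1 := by
  have inside : T.filter (· ∈ F) = F.filter (· ∈ T) := by
    ext
    simp [and_comm]
  have outside : (E \ T).filter (· ∈ F) = F.filter (· ∉ T) := by
    ext e
    simp only [Finset.mem_filter, Finset.mem_sdiff]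
    exact ⟨fun h => ⟨h.2, h.1.2⟩, fun h => ⟨⟨hF h.1, h.2⟩, h.1⟩⟩
  rw [← Finset.prod_filter, ← Finset.prod_filter, inside, outside,
    ← Finset.prod_filter_mul_prod_filter_not F (· ∈ T)]
  congr 1 <;> exact Finset.prod_congr rfl fun e he => by simp [(Finset.mem_filter.1 he).2]

lemma sum_powerset_prod_mul_prod_indicator_sub (hF : F ⊆ E) (y z : α → R) :
    ∑ T ∈ E.powerset, ((∏ e ∈ T, y e) * ∏ e ∈ E \ T, (1 - y e)) *
      ∏ e ∈ F, ((if e ∈ T then 1 else 0) - z e) = ∏ e ∈ F, (y e - z e) := by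
  calc ∑ T ∈ E.powerset, ((∏ e ∈ T, y e) * ∏ e ∈ E \ T, (1 - y e)) *
        ∏ e ∈ F, ((if e ∈ T then 1 else 0) - z e)
      = ∑ T ∈ E.powerset, (∏ e ∈ T, y e * if e ∈ F then 1 - z e else 1) *
          ∏ e ∈ E \ T, (1 - y e) * if e ∈ F then -z e else 1 := by
        refine Finset.sum_congr rfl fun T _ => ?_
        rw [prod_indicator_sub_eq hF, Finset.prod_mul_distrib, Finset.prod_mul_distrib]
        ring
    _ = ∏ e ∈ E, ((y e * if e ∈ F then 1 - z e else 1) +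
          (1 - y e) * if e ∈ F then -z e else 1) := (Finset.prod_add _ _ _).symm
    _ = ∏ e ∈ F, (y e - z e) := by
        rw [← Finset.prod_subset hF fun e _ he => by simp [he]]
        refine Finset.prod_congr rfl fun e he => ?_
        rw [if_pos he, if_pos he]
        ring

lemma sum_powerset_prod_mul_prod_indicator_sub_of_injective {e : κ → α}
    (he : Function.Injective e) (heE : ∀ l, e l ∈ E) (y : α → R) (z : κ → R) :
    ∑ T ∈ E.powerset, ((∏ a ∈ T, y a) * ∏ a ∈ E \ T, (1 - y a)) *
      ∏ l, ((if e l ∈ T then 1 else 0) - z l) = ∏ l, (y (e l) - z l) := by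
  have hF : Finset.univ.map ⟨e, he⟩ ⊆ E := fun a ha => by
    obtain ⟨l, -, rfl⟩ := Finset.mem_map.1 ha
    exact heE l
  simpa [he.extend_apply] using
    sum_powerset_prod_mul_prod_indicator_sub hF y (Function.extend e z 0)

end BernoulliSubset

section ColorIndicator

variable {V α S : Type*} [Fintype V] [DecidableEq S]

/-- The indicator that the points `x` have the colors prescribed by `cT`. -/
def colorInd (c : α → S) (cT : V → S) (x : V → α) : ℝ :=
  ∏ v, if c (x v) = cT v then 1 else 0

lemma colorInd_eq_ite (c : α → S) (cT : V → S) (x : V → α) :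
    colorInd c cT x = if c ∘ x = cT then 1 else 0 := by
  rw [colorInd, Fintype.prod_ite_zero, Finset.prod_const_one]
  simp only [funext_iff, Function.comp_apply]

lemma sum_colorInd_mul [DecidableEq V] [Fintype S] (c : α → S) (x : V → α) (f : (V → S) → ℝ) :
    ∑ cT, colorInd c cT x * f cT = f (c ∘ x) := by
  simp [colorInd_eq_ite]

end ColorIndicator

/-- The edges of the complete graph on `V`. -/
abbrev allEdges (V : Type*) [Fintype V] [DecidableEq V] : Finset (Sym2 V) :=
  (⊤ : SimpleGraph V).edgeFinset

namespace WGraph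

variable {ι ι' S V : Type*}

/-- The weight of the pair `e` of sample indices under the sample `x`. -/
def edge (G : WGraph ι S) (x : V → ι) : Sym2 V → ℝ :=
  Sym2.lift ⟨fun u v => G.w (x u) (x v), fun _ _ => G.symm _ _⟩

lemma edge_mem_Icc (G : WGraph ι S) (x : V → ι) (e : Sym2 V) : G.edge x e ∈ Icc (0 : ℝ) 1 := by
  induction e with | _ u v => exact G.mem_Icc _ _

variable [Fintype V] [DecidableEq V]

/-- The probability that the random simple graph which joins each pair of sample indices
independently, with probability the weight of that pair under the sample `x`, has edge set `T`. -/
def edgeProb (G : WGraph ι S) (x : V → ι) (T : Finset (Sym2 V)) : ℝ :=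
  (∏ e ∈ T, G.edge x e) * ∏ e ∈ allEdges V \ T, (1 - G.edge x e)

lemma edgeProb_nonneg (G : WGraph ι S) (x : V → ι) (T : Finset (Sym2 V)) : 0 ≤ G.edgeProb x T :=
  mul_nonneg (Finset.prod_nonneg fun e _ => (G.edge_mem_Icc x e).1)
    (Finset.prod_nonneg fun e _ => sub_nonneg.2 (G.edge_mem_Icc x e).2)

lemma sum_edgeProb_mul_prod {κ : Type*} [Fintype κ] (G : WGraph ι S) (x : V → ι)
    {e : κ → Sym2 V} (he : Function.Injective e) (heE : ∀ l, e l ∈ allEdges V) (z : κ → ℝ) :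
    ∑ T ∈ (allEdges V).powerset, G.edgeProb x T * ∏ l, ((if e l ∈ T then 1 else 0) - z l) =
      ∏ l, (G.edge x (e l) - z l) :=
  sum_powerset_prod_mul_prod_indicator_sub_of_injective he heE _ z

lemma sum_edgeProb (G : WGraph ι S) (x : V → ι) :
    ∑ T ∈ (allEdges V).powerset, G.edgeProb x T = 1 := by
  simpa using G.sum_edgeProb_mul_prod x (e := Empty.elim) (Function.injective_of_subsingleton _)
    (fun l => l.elim) Empty.elim

variable [Fintype ι] [Fintype ι']

section SampleExp

variable (G : WGraph ι S) {F F' : (V → ι) → Finset (Sym2 V) → ℝ}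

/-- The expectation of `F x T`, where the vertices `x` are drawn uniformly and independently from
`G` and `T` is the edge set of the random simple graph on the sample given by the weights. -/
def sampleExp (F : (V → ι) → Finset (Sym2 V) → ℝ) : ℝ :=
  𝔼 x, ∑ T ∈ (allEdges V).powerset, G.edgeProb x T * F x T

lemma sampleExp_mono (h : ∀ x T, F x T ≤ F' x T) : G.sampleExp F ≤ G.sampleExp F' :=
  Finset.expect_le_expect fun x _ => Finset.sum_le_sum fun T _ =>
    mul_le_mul_of_nonneg_left (h x T) (G.edgeProb_nonneg x T)

lemma sampleExp_nonneg (h : ∀ x T, 0 ≤ F x T) : 0 ≤ G.sampleExp F :=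
  Finset.expect_nonneg fun x _ => Finset.sum_nonneg fun T _ =>
    mul_nonneg (G.edgeProb_nonneg x T) (h x T)

lemma sampleExp_add : G.sampleExp (fun x T => F x T + F' x T) = G.sampleExp F + G.sampleExp F' := by
  simp only [sampleExp, mul_add, Finset.sum_add_distrib, Finset.expect_add_distrib]

lemma sampleExp_const_mul (a : ℝ) : G.sampleExp (fun x T => a * F x T) = a * G.sampleExp F := by
  simp only [sampleExp, Finset.mul_expect, Finset.mul_sum, mul_left_comm]

lemma sampleExp_sum {κ : Type*} (s : Finset κ) (F : κ → (V → ι) → Finset (Sym2 V) → ℝ) :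
    G.sampleExp (fun x T => ∑ l ∈ s, F l x T) = ∑ l ∈ s, G.sampleExp (F l) := by
  simp only [sampleExp, Finset.mul_sum, ← Finset.expect_sum_comm]
  exact Finset.expect_congr rfl fun x _ => Finset.sum_comm

lemma sampleExp_expect {κ : Type*} [Fintype κ] (F : κ → (V → ι) → Finset (Sym2 V) → ℝ) :
    G.sampleExp (fun x T => 𝔼 l, F l x T) = 𝔼 l, G.sampleExp (F l) := by
  simp only [Fintype.expect_eq_sum_div_card, div_eq_inv_mul, sampleExp_const_mul, sampleExp_sum]

lemma sampleExp_eq_expect (f : (V → ι) → ℝ) : G.sampleExp (fun x _ => f x) = 𝔼 x, f x := by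
  simp only [sampleExp, ← Finset.sum_mul, sum_edgeProb, one_mul]

lemma sampleExp_const [Nonempty ι] (a : ℝ) :
    G.sampleExp (fun (_ : V → ι) (_ : Finset (Sym2 V)) => a) = a := by
  rw [sampleExp_eq_expect, Fintype.expect_const]

lemma sampleExp_sqrt_le [Nonempty ι] (hF : ∀ x T, 0 ≤ F x T) :
    G.sampleExp (fun x T => √(F x T)) ≤ √(G.sampleExp F) := by
  set m := G.sampleExp fun x T => √(F x T)
  have variance : G.sampleExp (fun x T => (√(F x T) - m) ^ 2) = G.sampleExp F - m ^ 2 := by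
    calc G.sampleExp (fun x T => (√(F x T) - m) ^ 2)
        = G.sampleExp fun x T => F x T + ((-2 * m) * √(F x T) + m ^ 2) := by
          refine congrArg G.sampleExp (funext₂ fun x T => ?_)
          linear_combination Real.sq_sqrt (hF x T)
      _ = G.sampleExp F - m ^ 2 := by
          rw [sampleExp_add, sampleExp_add, sampleExp_const_mul, sampleExp_const]
          ring
  have variance_nonneg : 0 ≤ G.sampleExp fun x T => (√(F x T) - m) ^ 2 :=
    G.sampleExp_nonneg fun _ _ => sq_nonneg _
  exact Real.le_sqrt_of_sq_le (by linarith)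

lemma mul_sampleExp_indicator_le {ε : ℝ} (P : (V → ι) → Finset (Sym2 V) → Prop)
    [∀ x T, Decidable (P x T)] (hF : ∀ x T, 0 ≤ F x T) (hP : ∀ x T, P x T → ε ≤ F x T) :
    ε * G.sampleExp (fun x T => if P x T then 1 else 0) ≤ G.sampleExp F := by
  rw [← sampleExp_const_mul]
  refine G.sampleExp_mono fun x T => ?_
  split_ifs with h
  · simpa using hP x T h
  · simpa using hF x T

end SampleExp

variable [DecidableEq S]

/-- The colored homomorphism density of the graph with edge set `T` and coloring `cT`. -/
def hom (G : WGraph ι S) (T : Finset (Sym2 V)) (cT : V → S) : ℝ :=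
  𝔼 x : V → ι, (∏ e ∈ T, G.edge x e) * colorInd G.c cT x

/-- The probability that the random sample has edge set `T` and coloring `cT`. -/
def sampleProb (G : WGraph ι S) (T : Finset (Sym2 V)) (cT : V → S) : ℝ :=
  𝔼 x : V → ι, G.edgeProb x T * colorInd G.c cT x

lemma sampleExp_comp_color [Fintype S] (G : WGraph ι S) (f : Finset (Sym2 V) → (V → S) → ℝ) :
    G.sampleExp (fun x T => f T (G.c ∘ x)) =
      ∑ T ∈ (allEdges V).powerset, ∑ cT, G.sampleProb T cT * f T cT := by
  simp only [sampleExp, sampleProb, Finset.expect_mul, ← Finset.expect_sum_comm, mul_assoc,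
    ← Finset.mul_sum, sum_colorInd_mul]

-- Inclusion–exclusion over the non-edges of the sample.
lemma sampleProb_eq_sum_hom (G : WGraph ι S) (T : Finset (Sym2 V)) (cT : V → S) :
    G.sampleProb T cT =
      ∑ R ∈ (allEdges V \ T).powerset, (-1) ^ R.card * G.hom (T ∪ R) cT := by
  simp only [sampleProb, hom, Finset.mul_expect, ← Finset.expect_sum_comm]
  refine Finset.expect_congr rfl fun x _ => ?_
  simp only [edgeProb, sub_eq_add_neg, Finset.prod_one_add, Finset.prod_neg, Finset.mul_sum,
    Finset.sum_mul]
  refine Finset.sum_congr rfl fun R hR => ?_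
  have disjoint : Disjoint T R :=
    Finset.disjoint_sdiff.mono_right (Finset.mem_powerset.1 hR)
  rw [Finset.prod_union disjoint]
  ring

variable {G : WGraph ι S} {G' : WGraph ι' S} {δ : ℝ}

lemma abs_sampleProb_sub_le (hδ : ∀ T ⊆ allEdges V, ∀ cT : V → S, |G.hom T cT - G'.hom T cT| ≤ δ)
    {T : Finset (Sym2 V)} (hT : T ⊆ allEdges V) (cT : V → S) :
    |G.sampleProb T cT - G'.sampleProb T cT| ≤ 2 ^ (allEdges V).card * δ := by
  have hδ_nonneg : 0 ≤ δ := (abs_nonneg _).trans (hδ T hT cT)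
  rw [sampleProb_eq_sum_hom, sampleProb_eq_sum_hom, ← Finset.sum_sub_distrib]
  calc |∑ R ∈ (allEdges V \ T).powerset,
        ((-1) ^ R.card * G.hom (T ∪ R) cT - (-1) ^ R.card * G'.hom (T ∪ R) cT)|
      ≤ ∑ _R ∈ (allEdges V \ T).powerset, δ := by
        refine (Finset.abs_sum_le_sum_abs _ _).trans (Finset.sum_le_sum fun R hR => ?_)
        rw [← mul_sub, abs_mul, abs_neg_one_pow, one_mul]
        exact hδ _ (Finset.union_subset hT
          ((Finset.mem_powerset.1 hR).trans Finset.sdiff_subset)) cT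
    _ = 2 ^ (allEdges V \ T).card * δ := by simp
    _ ≤ 2 ^ (allEdges V).card * δ := by
        gcongr
        · norm_num
        · exact Finset.sdiff_subset

lemma abs_sampleExp_comp_color_sub_le [Fintype S]
    (hδ : ∀ T ⊆ allEdges V, ∀ cT : V → S, |G.hom T cT - G'.hom T cT| ≤ δ)
    {f : Finset (Sym2 V) → (V → S) → ℝ} (hf : ∀ T cT, |f T cT| ≤ 1) :
    |G.sampleExp (fun x T => f T (G.c ∘ x)) - G'.sampleExp fun x T => f T (G'.c ∘ x)| ≤
      2 ^ (allEdges V).card * Fintype.card (V → S) * (2 ^ (allEdges V).card * δ) := by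
  simp only [sampleExp_comp_color, ← Finset.sum_sub_distrib, ← sub_mul]
  calc |∑ T ∈ (allEdges V).powerset, ∑ cT, (G.sampleProb T cT - G'.sampleProb T cT) * f T cT|
      ≤ ∑ _T ∈ (allEdges V).powerset, ∑ _cT : V → S, 2 ^ (allEdges V).card * δ := by
        refine (Finset.abs_sum_le_sum_abs _ _).trans (Finset.sum_le_sum fun T hT => ?_)
        refine (Finset.abs_sum_le_sum_abs _ _).trans (Finset.sum_le_sum fun cT _ => ?_)
        rw [abs_mul]
        exact (mul_le_of_le_one_right (abs_nonneg _) (hf T cT)).trans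
          (abs_sampleProb_sub_le hδ (Finset.mem_powerset.1 hT) cT)
    _ = 2 ^ (allEdges V).card * Fintype.card (V → S) * (2 ^ (allEdges V).card * δ) := by
        simp only [Finset.sum_const, Finset.card_univ, Finset.card_powerset, nsmul_eq_mul]
        push_cast
        ring

end WGraph

/-! ### Random samples are close to the graph -/

section Resampling

variable {ι V : Type*} [Fintype ι] [Nonempty ι] [Fintype V] [DecidableEq V]

lemma expect_update (v : V) (F : (V → ι) → ℝ) :
    𝔼 x : V → ι, 𝔼 a, F (Function.update x v a) = 𝔼 x, F x := by
  let swap : (V → ι) × ι ≃ (V → ι) × ι :=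
    { toFun := fun q => (Function.update q.1 v q.2, q.1 v)
      invFun := fun q => (Function.update q.1 v q.2, q.1 v)
      left_inv := fun q => by simp
      right_inv := fun q => by simp }
  calc 𝔼 x : V → ι, 𝔼 a, F (Function.update x v a)
      = 𝔼 q : (V → ι) × ι, F (swap q).1 :=
        (Finset.expect_product' _ _ fun x a => F (Function.update x v a)).symm
    _ = 𝔼 q : (V → ι) × ι, F q.1 := Fintype.expect_equiv swap _ _ fun _ => rfl
    _ = 𝔼 x : V → ι, 𝔼 _a : ι, F x := Finset.expect_product' _ _ fun x _ => F x
    _ = 𝔼 x, F x := by simp only [Fintype.expect_const]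

lemma expect_sq_expect_comp_le {g : ι → ℝ} (hg : ∀ a, |g a| ≤ 1) (hg_mean : 𝔼 a, g a = 0) :
    𝔼 x : V → ι, (𝔼 v, g (x v)) ^ 2 ≤ 1 / Fintype.card V := by
  have covariance_le (v v' : V) : 𝔼 x : V → ι, g (x v) * g (x v') ≤ if v = v' then 1 else 0 := by
    split_ifs with h
    · refine Finset.expect_le Finset.univ_nonempty fun x _ => (le_abs_self _).trans ?_
      rw [abs_mul]
      exact mul_le_one₀ (hg _) (abs_nonneg _) (hg _)
    · rw [← expect_update v]
      refine (Finset.expect_eq_zero fun x _ => ?_).le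
      simp only [Function.update_self, Function.update_of_ne (Ne.symm h)]
      rw [← Finset.expect_mul, hg_mean, zero_mul]
  calc 𝔼 x : V → ι, (𝔼 v, g (x v)) ^ 2
      = 𝔼 v : V, 𝔼 v', 𝔼 x : V → ι, g (x v) * g (x v') := by
        simp only [sq, Finset.expect_mul_expect]
        rw [Finset.expect_comm]
        exact Finset.expect_congr rfl fun v _ => Finset.expect_comm _ _ _
    _ ≤ 𝔼 v : V, 𝔼 v', if v = v' then (1 : ℝ) else 0 :=
        Finset.expect_le_expect fun v _ => Finset.expect_le_expect fun v' _ => covariance_le v v'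
    _ ≤ 1 / Fintype.card V := by
        simp only [Fintype.expect_eq_sum_div_card, Finset.sum_ite_eq, Finset.mem_univ, if_true,
          Finset.sum_const, Finset.card_univ, nsmul_eq_mul]
        rw [mul_one_div]
        exact div_le_div_of_nonneg_right (div_self_le_one _) (Nat.cast_nonneg _)

lemma expect_comp_eq_fourCycle (A : ι → ι → ℝ) {i i' j j' : V} (hii' : i ≠ i') (hij : i ≠ j)
    (hij' : i ≠ j') (hi'j : i' ≠ j) (hi'j' : i' ≠ j') (hjj' : j ≠ j') :
    𝔼 x : V → ι, A (x i) (x j) * A (x i') (x j) * A (x i) (x j') * A (x i') (x j') =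
      fourCycle A := by
  rw [← expect_update j']
  simp only [Function.update_self, Function.update_of_ne hij', Function.update_of_ne hi'j',
    Function.update_of_ne hjj']
  rw [← expect_update j]
  simp only [Function.update_self, Function.update_of_ne hij, Function.update_of_ne hi'j]
  rw [← expect_update i']
  simp only [Function.update_self, Function.update_of_ne hii']
  rw [← expect_update i]
  simp only [Function.update_self, Fintype.expect_const, fourCycle]

end Resampling

namespace StepApprox

variable {ι S Q V : Type*} [DecidableEq V] {G : WGraph ι S} {ε : ℝ}

/-- The difference between the simple graph with edge set `T` and the step function read off at
the sample points `x`. -/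
def sampleDiff (A : StepApprox G Q) (x : V → ι) (T : Finset (Sym2 V)) (i j : V) : ℝ :=
  (if s(i, j) ∈ T then 1 else 0) - A.weight (A.part (x i)) (A.part (x j))


lemma abs_sampleDiff_le_one (A : StepApprox G Q) (x : V → ι) (T : Finset (Sym2 V)) (i j : V) :
    |A.sampleDiff x T i j| ≤ 1 :=
  abs_sub_le_of_nonneg_of_le (by split_ifs <;> simp) (by split_ifs <;> simp)
    (A.weight_mem_Icc _ _).1 (A.weight_mem_Icc _ _).2

variable [Fintype ι] [Nonempty ι] [Fintype V]

lemma sampleExp_sampleDiff_eq_fourCycle (A : StepApprox G Q) {i i' j j' : V} (hii' : i ≠ i')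
    (hij : i ≠ j) (hij' : i ≠ j') (hi'j : i' ≠ j) (hi'j' : i' ≠ j') (hjj' : j ≠ j') :
    G.sampleExp (fun x T => A.sampleDiff x T i j * A.sampleDiff x T i' j *
      A.sampleDiff x T i j' * A.sampleDiff x T i' j') = fourCycle A.residual := by
  rw [← expect_comp_eq_fourCycle (V := V) A.residual hii' hij hij' hi'j hi'j' hjj']
  refine Finset.expect_congr rfl fun x _ => ?_
  let row : Fin 4 → V := ![i, i', i, i']
  let col : Fin 4 → V := ![j, j, j', j']
  have injective : Function.Injective fun l => s(row l, col l) := by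
    intro l l' h
    fin_cases l <;> fin_cases l' <;> simp_all [row, col, eq_comm]
  have mem_allEdges (l : Fin 4) : s(row l, col l) ∈ allEdges V := by
    fin_cases l <;> simpa [row, col]
  have independent_edges := G.sum_edgeProb_mul_prod x injective mem_allEdges
    fun l => A.weight (A.part (x (row l))) (A.part (x (col l)))
  simp only [Fin.prod_univ_four] at independent_edges
  exact independent_edges

lemma sampleExp_sampleDiff_le (A : StepApprox G Q) (hA : CutLe A.residual ε) {d : V → V → ℝ}
    (hd : ∀ i j, 0 ≤ d i j) (hd_self : ∀ i, d i i = 1) (i i' j j' : V) :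
    G.sampleExp (fun x T => A.sampleDiff x T i j * A.sampleDiff x T i' j *
      A.sampleDiff x T i j' * A.sampleDiff x T i' j') ≤
      ε + (d i i' + d i j + d i j' + d i' j + d i' j' + d j j') := by
  have fourCycle_le : fourCycle A.residual ≤ ε := hA.fourCycle_le A.abs_residual_le_one
  have hε : 0 ≤ ε := (fourCycle_nonneg _).trans fourCycle_le
  by_cases distinct : i ≠ i' ∧ i ≠ j ∧ i ≠ j' ∧ i' ≠ j ∧ i' ≠ j' ∧ j ≠ j'
  · obtain ⟨hii', hij, hij', hi'j, hi'j', hjj'⟩ := distinct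
    rw [A.sampleExp_sampleDiff_eq_fourCycle hii' hij hij' hi'j hi'j' hjj']
    linarith [hd i i', hd i j, hd i j', hd i' j, hd i' j', hd j j']
  · have one_le : 1 ≤ ε + (d i i' + d i j + d i j' + d i' j + d i' j' + d j j') := by
      have := hd i i'; have := hd i j; have := hd i j'
      have := hd i' j; have := hd i' j'; have := hd j j'
      contrapose! distinct
      refine ⟨?_, ?_, ?_, ?_, ?_, ?_⟩ <;> rintro rfl <;> rw [hd_self] at distinct <;> linarith
    refine le_trans ?_ one_le
    rw [← G.sampleExp_const (V := V) 1]
    refine G.sampleExp_mono fun x T => (le_abs_self _).trans ?_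
    simp only [abs_mul]
    have hle := A.abs_sampleDiff_le_one x T
    exact mul_le_one₀ (mul_le_one₀ (mul_le_one₀ (hle _ _) (abs_nonneg _) (hle _ _))
      (abs_nonneg _) (hle _ _)) (abs_nonneg _) (hle _ _)

lemma sampleExp_fourCycle_sampleDiff_le [Nonempty V] (A : StepApprox G Q)
    (hA : CutLe A.residual ε) :
    G.sampleExp (fun (x : V → ι) T => fourCycle (A.sampleDiff x T)) ≤ ε + 6 / Fintype.card V := by
  let d (i j : V) : ℝ := if i = j then 1 else 0
  have d_nonneg (i j : V) : 0 ≤ d i j := by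
    simp only [d]
    split_ifs <;> simp
  have expect_d (i : V) : 𝔼 j, d i j = 1 / Fintype.card V := by
    simp [d]
  simp only [fourCycle, WGraph.sampleExp_expect]
  calc 𝔼 i, 𝔼 i', 𝔼 j, 𝔼 j', G.sampleExp (fun (x : V → ι) T => A.sampleDiff x T i j *
        A.sampleDiff x T i' j * A.sampleDiff x T i j' * A.sampleDiff x T i' j')
      ≤ 𝔼 i : V, 𝔼 i', 𝔼 j, 𝔼 j',
          (ε + (d i i' + d i j + d i j' + d i' j + d i' j' + d j j')) :=
        Finset.expect_le_expect fun i _ => Finset.expect_le_expect fun i' _ =>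
          Finset.expect_le_expect fun j _ => Finset.expect_le_expect fun j' _ =>
            A.sampleExp_sampleDiff_le hA d_nonneg (fun i => if_pos rfl) i i' j j'
    _ = ε + 6 / Fintype.card V := by
        simp only [Finset.expect_add_distrib, Fintype.expect_const, expect_d]
        ring

end StepApprox

section PartDeviation

variable {ι V R : Type*} [Fintype ι] [Fintype V] [DecidableEq R]

/-- The difference between the density of the class `s` of `p` in the sample `x` and in `ι`. -/
def partDeviation (p : ι → R) (x : V → ι) (s : R) : ℝ :=
  (𝔼 v, if p (x v) = s then 1 else 0) - 𝔼 a, if p a = s then 1 else 0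

lemma expect_partDeviation_sq_le [Nonempty ι] [Nonempty V] [DecidableEq V] (p : ι → R) (s : R) :
    𝔼 x : V → ι, partDeviation p x s ^ 2 ≤ 1 / Fintype.card V := by
  let density : ℝ := 𝔼 a, if p a = s then 1 else 0
  let centred (a : ι) : ℝ := (if p a = s then 1 else 0) - density
  have density_mem : density ∈ Icc (0 : ℝ) 1 :=
    expect_mem_Icc fun a => by split_ifs <;> simp
  have partDeviation_eq (x : V → ι) : partDeviation p x s = 𝔼 v, centred (x v) := by
    simp only [centred, Finset.expect_sub_distrib, Fintype.expect_const, partDeviation, density]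
  simp only [partDeviation_eq]
  refine expect_sq_expect_comp_le (fun a => ?_) ?_
  · exact abs_sub_le_of_nonneg_of_le (by split_ifs <;> simp) (by split_ifs <;> simp)
      density_mem.1 density_mem.2
  · simp only [centred, Finset.expect_sub_distrib, Fintype.expect_const, density, sub_self]

end PartDeviation

namespace WGraph

lemma sampleExp_abs_partDeviation_le {ι S V R : Type*} [Fintype ι] [Nonempty ι] [Fintype V]
    [Nonempty V] [DecidableEq V] [DecidableEq R] (G : WGraph ι S) (p : ι → R) (s : R) :
    G.sampleExp (fun (x : V → ι) _ => |partDeviation p x s|) ≤ 1 / √(Fintype.card V) := by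
  simp only [← Real.sqrt_sq_eq_abs]
  refine (G.sampleExp_sqrt_le fun _ _ => sq_nonneg _).trans ?_
  rw [sampleExp_eq_expect, ← Real.sqrt_one, ← Real.sqrt_div zero_le_one]
  exact Real.sqrt_le_sqrt (expect_partDeviation_sq_le p s)

end WGraph

namespace StepApprox

variable {ι κ S Q V : Type*} [Fintype V] [DecidableEq V] [DecidableEq S] [Fintype S] [Fintype Q]
  [DecidableEq Q] {ε : ℝ}

/-- A bound for the distance between a graph and its sample `(x, T)`: the distance `ε` to the step
function, the distance of the sample to the sampled step function, and the cost of matching the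
parts with their sampled versions. -/
def sampleError [Fintype ι] {G : WGraph ι S} (A : StepApprox G Q) (ε : ℝ) (x : V → ι)
    (T : Finset (Sym2 V)) : ℝ :=
  ε + √√(fourCycle (A.sampleDiff x T)) + 2 * ∑ s, |partDeviation A.part x s|

lemma sampleError_nonneg [Fintype ι] {G : WGraph ι S} (A : StepApprox G Q) (hε : 0 ≤ ε)
    (x : V → ι) (T : Finset (Sym2 V)) : 0 ≤ A.sampleError ε x T := by
  unfold sampleError
  positivity

lemma sampleExp_sampleError_le [Fintype ι] [Nonempty ι] [Nonempty V] {G : WGraph ι S}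
    (A : StepApprox G Q) (hA : CutLe A.residual ε) :
    G.sampleExp (A.sampleError (V := V) ε) ≤
      ε + √√(ε + 6 / Fintype.card V) +
        2 * (Fintype.card (S × Q) * (1 / √(Fintype.card V))) := by
  unfold sampleError
  simp only [WGraph.sampleExp_add, WGraph.sampleExp_const_mul, WGraph.sampleExp_sum,
    WGraph.sampleExp_const]
  gcongr ε + ?_ + 2 * ?_
  · refine (G.sampleExp_sqrt_le fun _ _ => Real.sqrt_nonneg _).trans (Real.sqrt_le_sqrt ?_)
    refine (G.sampleExp_sqrt_le fun _ _ => fourCycle_nonneg _).trans (Real.sqrt_le_sqrt ?_)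
    exact A.sampleExp_fourCycle_sampleDiff_le hA
  · rw [← nsmul_eq_mul, ← Finset.card_univ]
    exact Finset.sum_le_card_nsmul _ _ _ fun s _ => G.sampleExp_abs_partDeviation_le A.part s

-- The permutation matches the parts of the vertices with the parts of the blown-up sample; off the
-- few mismatched vertices, both graphs are compared with the step function.
lemma close_sample [Fintype κ] [Nonempty κ] {G : WGraph (V × κ) S} (A : StepApprox G Q)
    (hε : 0 ≤ ε) (hA : CutLe A.residual ε) (x : V → V × κ) (T : Finset (Sym2 V)) :
    G.Close ((WGraph.ofEdges T (G.c ∘ x)).comap Prod.fst) (A.sampleError ε x T) := by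
  let sampledPart (i : V × κ) : S × Q := A.part (x i.1)
  obtain ⟨π, hπ⟩ := exists_perm_disagreement_le A.part sampledPart
  have expect_sampledPart (s : S × Q) : (𝔼 i, if sampledPart i = s then (1 : ℝ) else 0) =
      𝔼 v, if A.part (x v) = s then 1 else 0 := by
    rw [← Finset.univ_product_univ, Finset.expect_product]
    exact Finset.expect_congr rfl fun v _ =>
      Fintype.expect_const (if A.part (x v) = s then (1 : ℝ) else 0)
  have mismatch_le : disagreement (A.part ∘ π) sampledPart ≤
      ∑ s, |partDeviation A.part x s| := by
    refine hπ.trans_eq (Finset.sum_congr rfl fun s _ => ?_)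
    rw [expect_sampledPart, abs_sub_comm, partDeviation]
  refine ⟨π, ?_, ?_⟩
  · have sample_close := (cutLe_sqrt_sqrt_fourCycle (A.sampleDiff x T)).blowup (κ := κ)
    have parts_close := (cutLe_step_sub A.weight_mem_Icc (A.part ∘ π) sampledPart).mono
      (mul_le_mul_of_nonneg_left mismatch_le zero_le_two)
    unfold sampleError
    convert ((hA.comp_equiv π).add sample_close.neg).add parts_close using 3 with i j
    simp only [WGraph.comap, WGraph.ofEdges, residual, sampleDiff, sampledPart,
      Function.comp_apply]
    ring
  · calc disagreement (G.c ∘ π) (G.c ∘ x ∘ Prod.fst)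
        = disagreement (Prod.fst ∘ A.part ∘ π) (Prod.fst ∘ sampledPart) := by
          congr 1 <;> funext i <;> simp [sampledPart, A.part_fst]
      _ ≤ ∑ s, |partDeviation A.part x s| :=
          (disagreement_comp_left_le _ _ _).trans mismatch_le
      _ ≤ A.sampleError ε x T := by
          have : 0 ≤ ∑ s, |partDeviation A.part x s| := by positivity
          unfold sampleError
          linarith [Real.sqrt_nonneg √(fourCycle (A.sampleDiff x T))]

end StepApprox

lemma exists_pos_add_sqrt_sqrt_lt {ε : ℝ} (hε : 0 < ε) : ∃ η > 0, η + √√η < ε := by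
  have tendsto_zero : Tendsto (fun η : ℝ => η + √√η) (nhdsWithin 0 (Ioi 0)) (nhds 0) := by
    have continuous : Continuous fun η : ℝ => η + √√η := by fun_prop
    simpa using (continuous.tendsto 0).mono_left nhdsWithin_le_nhds
  obtain ⟨η, hη, hη_pos⟩ :=
    ((tendsto_zero.eventually_lt_const hε).and self_mem_nhdsWithin).exists
  exact ⟨η, hη_pos, hη⟩

lemma exists_nat_add_sqrt_sqrt_lt {ε η : ℝ} (hη : η + √√η < ε) (M : ℝ) :
    ∃ k : ℕ, 0 < k ∧ η + √√(η + 6 / k) + 2 * (M * (1 / √k)) < ε := by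
  have tendsto_error : Tendsto (fun k : ℕ => η + √√(η + 6 / k) + 2 * (M * (1 / √k))) atTop
      (nhds (η + √√(η + 0) + 2 * (M * 0))) := by
    have sqrt_atTop : Tendsto (fun k : ℕ => √(k : ℝ)) atTop atTop :=
      Real.tendsto_sqrt_atTop.comp tendsto_natCast_atTop_atTop
    exact (tendsto_const_nhds.add (tendsto_const_nhds.add
      (tendsto_const_div_atTop_nhds_zero_nat 6)).sqrt.sqrt).add
      (((sqrt_atTop.const_div_atTop 1).const_mul M).const_mul 2)
  obtain ⟨k, hk, hk_pos⟩ := ((tendsto_error.eventually_lt_const (by simpa using hη)).and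
    (eventually_gt_atTop 0)).exists
  exact ⟨k, hk_pos, hk⟩

namespace WGraph

variable {ε : ℝ}

open scoped Classical in
lemma exists_sample_size (S : Type*) [Finite S] [DecidableEq S] (hε : 0 < ε) :
    ∃ k : ℕ, 0 < k ∧ ∀ m : ℕ, 0 < m → ∀ G : WGraph (Fin k × Fin m) S,
      G.sampleExp (fun (x : Fin k → Fin k × Fin m) T =>
        if G.Close ((ofEdges T (G.c ∘ x)).comap Prod.fst) ε then 0 else 1) ≤ 1 / 4 := by
  have := Fintype.ofFinite S
  obtain ⟨η, hη_pos, hη⟩ := exists_pos_add_sqrt_sqrt_lt (ε := ε / 4) (by positivity)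
  obtain ⟨r, hr⟩ := exists_nat_gt (1 / η ^ 2)
  rw [div_lt_iff₀ (by positivity)] at hr
  obtain ⟨k, hk_pos, hk⟩ :=
    exists_nat_add_sqrt_sqrt_lt hη (Fintype.card (S × (Fin r → Bool × Bool)))
  refine ⟨k, hk_pos, fun m hm G => ?_⟩
  have : Nonempty (Fin k) := ⟨⟨0, hk_pos⟩⟩
  have : Nonempty (Fin m) := ⟨⟨0, hm⟩⟩
  obtain ⟨A, hA⟩ := StepApprox.weak_regularity G hη_pos.le hr
  have markov := G.mul_sampleExp_indicator_le (ε := ε) (F := A.sampleError η)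
    (fun x T => ¬ G.Close ((ofEdges T (G.c ∘ x)).comap Prod.fst) ε)
    (fun x T => A.sampleError_nonneg hη_pos.le x T)
    (fun x T hfar => le_of_not_ge fun hle => hfar ((A.close_sample hη_pos.le hA x T).mono hle))
  have mean_error := A.sampleExp_sampleError_le (V := Fin k) hA
  rw [Fintype.card_fin] at mean_error
  simp only [ite_not] at markov
  refine le_of_mul_le_mul_left ?_ hε
  linarith

open scoped Classical in
lemma exists_edges_coloring_of_sampleExp_le {ι ι' S V : Type*} [Fintype ι] [Nonempty ι] [Fintype ι']
    [Fintype S] [DecidableEq S] [Fintype V] [DecidableEq V] {G : WGraph ι S} {G' : WGraph ι' S}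
    {P P' : Finset (Sym2 V) → (V → S) → Prop}
    (hP : G.sampleExp (fun (x : V → ι) T => if P T (G.c ∘ x) then 0 else 1) ≤ 1 / 4)
    (hP' : G'.sampleExp (fun (x : V → ι') T => if P' T (G'.c ∘ x) then 0 else 1) ≤ 1 / 4) {δ : ℝ}
    (hom_close : ∀ T ⊆ allEdges V, ∀ cT : V → S, |G.hom T cT - G'.hom T cT| ≤ δ)
    (hδ : 2 ^ (allEdges V).card * Fintype.card (V → S) * (2 ^ (allEdges V).card * δ) ≤ 1 / 4) :
    ∃ T cT, P T cT ∧ P' T cT := by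
  by_contra! none_both
  let fail (R : Finset (Sym2 V) → (V → S) → Prop) (T : Finset (Sym2 V)) (cT : V → S) : ℝ :=
    if R T cT then 0 else 1
  have abs_fail_le (T : Finset (Sym2 V)) (cT : V → S) : |fail P' T cT| ≤ 1 := by
    simp only [fail]
    split_ifs <;> simp
  have transfer := (abs_le.1 (abs_sampleExp_comp_color_sub_le hom_close abs_fail_le)).2
  have one_le : 1 ≤ G.sampleExp fun x T => fail P T (G.c ∘ x) + fail P' T (G.c ∘ x) := by
    rw [← G.sampleExp_const (V := V) 1]
    refine G.sampleExp_mono fun x T => ?_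
    by_cases h : P T (G.c ∘ x)
    · simp [fail, h, none_both _ _ h]
    · simp only [fail, h, if_false]
      split_ifs <;> simp
  rw [sampleExp_add] at one_le
  linarith

lemma hom_comap_equiv {ι κ S V : Type*} [Fintype ι] [Fintype κ] [Fintype V] [DecidableEq V]
    [DecidableEq S] (G : WGraph ι S) (e : κ ≃ ι) (T : Finset (Sym2 V)) (cT : V → S) :
    (G.comap e).hom T cT = G.hom T cT := by
  have edge_comap (x : V → κ) (p : Sym2 V) : (G.comap e).edge x p = G.edge (e ∘ x) p := by
    induction p with | _ u v => rfl
  rw [hom, hom]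
  refine Fintype.expect_equiv ((Equiv.refl V).arrowCongr e) _ _ fun x => ?_
  simp only [edge_comap]
  rfl

theorem finite_inverse_counting (S : Type*) [Finite S] [DecidableEq S] (hε : 0 < ε) :
    ∃ k : ℕ, 0 < k ∧ ∃ δ : ℝ, 0 < δ ∧ ∀ m : ℕ, 0 < m → ∀ G G' : WGraph (Fin (k * m)) S,
      (∀ T ⊆ allEdges (Fin k), ∀ cT : Fin k → S, |G.hom T cT - G'.hom T cT| ≤ δ) →
      G.Close G' ε := by
  have := Fintype.ofFinite S
  obtain ⟨k, hk_pos, far_prob_le⟩ := exists_sample_size S (half_pos hε)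
  let N : ℝ := 2 ^ (allEdges (Fin k)).card * Fintype.card (Fin k → S) *
    2 ^ (allEdges (Fin k)).card
  have error_le : 2 ^ (allEdges (Fin k)).card * (Fintype.card (Fin k → S) : ℝ) *
      (2 ^ (allEdges (Fin k)).card * (1 / (4 * (N + 1)))) ≤ 1 / 4 := by
    calc _ = N / (4 * (N + 1)) := by ring
      _ ≤ 1 / 4 := by
        rw [div_le_div_iff₀ (by positivity) (by norm_num)]
        linarith
  refine ⟨k, hk_pos, 1 / (4 * (N + 1)), by positivity, fun m hm G G' hom_close => ?_⟩
  have : Nonempty (Fin k × Fin m) := ⟨⟨0, hk_pos⟩, ⟨0, hm⟩⟩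
  refine Close.of_comap_equiv finProdFinEquiv ?_
  obtain ⟨T, cT, hG, hG'⟩ := exists_edges_coloring_of_sampleExp_le
    (P := fun T cT => (G.comap finProdFinEquiv).Close ((ofEdges T cT).comap Prod.fst) (ε / 2))
    (P' := fun T cT => (G'.comap finProdFinEquiv).Close ((ofEdges T cT).comap Prod.fst) (ε / 2))
    (far_prob_le m hm (G.comap finProdFinEquiv)) (far_prob_le m hm (G'.comap finProdFinEquiv))
    (by simpa only [hom_comap_equiv] using hom_close) error_le
  exact (add_halves ε) ▸ hG.trans hG'.symm

end WGraph

/-! ### The cut norm -/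

/-- Lebesgue measure on the unit interval, as a probability measure on `ℝ`. -/
def mu01 : Measure ℝ := volume.restrict I01

instance : IsProbabilityMeasure mu01 := ⟨by simp [mu01, I01]⟩

lemma integrable_of_mem_Icc {α : Type*} [MeasurableSpace α] {μ : Measure α} [IsFiniteMeasure μ]
    {f : α → ℝ} (hf : Measurable f) (hf01 : ∀ x, f x ∈ Icc (0 : ℝ) 1) : Integrable f μ :=
  Integrable.of_mem_Icc 0 1 hf.aemeasurable (Eventually.of_forall hf01)

lemma integrable_mul_of_mem_Icc {α : Type*} [MeasurableSpace α] {μ : Measure α} {h a : α → ℝ}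
    (hh : Integrable h μ) (ha : Measurable a) (ha01 : ∀ x, a x ∈ Icc (0 : ℝ) 1) :
    Integrable (fun x => h x * a x) μ :=
  hh.mul_bdd (c := 1) ha.aestronglyMeasurable <| Eventually.of_forall fun x =>
    abs_le.2 ⟨by linarith [(ha01 x).1], (ha01 x).2⟩

section CutNorm

variable {f g : ℝ → ℝ → ℝ}

lemma abs_setIntegral_setIntegral_le_integral_abs
    (hf : Integrable (Function.uncurry f) (mu01.prod mu01)) (A B : Set ℝ) :
    |∫ x in A, ∫ y in B, f x y ∂mu01 ∂mu01| ≤ ∫ p, |Function.uncurry f p| ∂(mu01.prod mu01) := by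
  calc |∫ x in A, ∫ y in B, f x y ∂mu01 ∂mu01|
      = |∫ p in A ×ˢ B, Function.uncurry f p ∂(mu01.prod mu01)| := by
        rw [setIntegral_prod _ hf.integrableOn]
        rfl
    _ ≤ ∫ p in A ×ˢ B, |Function.uncurry f p| ∂(mu01.prod mu01) := abs_integral_le_integral_abs
    _ ≤ ∫ p, |Function.uncurry f p| ∂(mu01.prod mu01) :=
        setIntegral_le_integral hf.abs (Eventually.of_forall fun _ => abs_nonneg _)

lemma cutNorm_le {M : ℝ}
    (h : ∀ A B, MeasurableSet A → MeasurableSet B →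
      |∫ x in A, ∫ y in B, f x y ∂mu01 ∂mu01| ≤ M) : cutNorm f ≤ M := by
  refine csSup_le ⟨_, ∅, ∅, .empty, .empty, empty_subset _, empty_subset _, rfl⟩ ?_
  rintro _ ⟨A, B, hA, hB, hAI, hBI, rfl⟩
  simpa only [mu01, Measure.restrict_restrict_of_subset hAI,
    Measure.restrict_restrict_of_subset hBI] using h A B hA hB

lemma cutNorm_nonneg (f : ℝ → ℝ → ℝ) : 0 ≤ cutNorm f := by
  refine Real.sSup_nonneg ?_
  rintro _ ⟨A, B, -, -, -, -, rfl⟩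
  exact abs_nonneg _

lemma cutNorm_neg (f : ℝ → ℝ → ℝ) : cutNorm (fun x y => -f x y) = cutNorm f := by
  simp only [cutNorm, integral_neg, abs_neg]

lemma cutNorm_le_integral_abs (hf : Integrable (Function.uncurry f) (mu01.prod mu01)) :
    cutNorm f ≤ ∫ p, |Function.uncurry f p| ∂(mu01.prod mu01) :=
  cutNorm_le fun A B _ _ => abs_setIntegral_setIntegral_le_integral_abs hf A B

lemma le_cutNorm (hf : Integrable (Function.uncurry f) (mu01.prod mu01)) {A B : Set ℝ}
    (hA : MeasurableSet A) (hB : MeasurableSet B) :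
    |∫ x in A, ∫ y in B, f x y ∂mu01 ∂mu01| ≤ cutNorm f := by
  have bounded : BddAbove { r | ∃ A B : Set ℝ, MeasurableSet A ∧ MeasurableSet B ∧ A ⊆ I01 ∧
      B ⊆ I01 ∧ r = |∫ x in A, ∫ y in B, f x y| } := by
    refine ⟨∫ p, |Function.uncurry f p| ∂(mu01.prod mu01), ?_⟩
    rintro _ ⟨A, B, -, -, hAI, hBI, rfl⟩
    simpa only [mu01, Measure.restrict_restrict_of_subset hAI,
      Measure.restrict_restrict_of_subset hBI] using
      abs_setIntegral_setIntegral_le_integral_abs hf A B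
  refine le_csSup bounded ⟨A ∩ I01, B ∩ I01, hA.inter measurableSet_Icc,
    hB.inter measurableSet_Icc, inter_subset_right, inter_subset_right, ?_⟩
  rw [mu01, Measure.restrict_restrict hA, Measure.restrict_restrict hB]

lemma cutNorm_add_le (hf : Integrable (Function.uncurry f) (mu01.prod mu01))
    (hg : Integrable (Function.uncurry g) (mu01.prod mu01)) :
    cutNorm (fun x y => f x y + g x y) ≤ cutNorm f + cutNorm g := by
  refine cutNorm_le fun A B hA hB => ?_
  have split : ∫ x in A, ∫ y in B, f x y + g x y ∂mu01 ∂mu01 =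
      (∫ x in A, ∫ y in B, f x y ∂mu01 ∂mu01) + ∫ x in A, ∫ y in B, g x y ∂mu01 ∂mu01 := by
    have restrict {h : ℝ × ℝ → ℝ} (hh : Integrable h (mu01.prod mu01)) :
        Integrable h ((mu01.restrict A).prod (mu01.restrict B)) := by
      rw [Measure.prod_restrict]
      exact hh.restrict
    exact integral_integral_add (restrict hf) (restrict hg)
  rw [split]
  exact (abs_add_le _ _).trans (add_le_add (le_cutNorm hf hA hB) (le_cutNorm hg hA hB))

lemma cutNorm_congr_ae (h : ∀ᵐ x ∂mu01, ∀ᵐ y ∂mu01, f x y = g x y) : cutNorm f = cutNorm g := by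
  have eq {A B : Set ℝ} (hA : A ⊆ I01) (hB : B ⊆ I01) :
      ∫ x in A, ∫ y in B, f x y = ∫ x in A, ∫ y in B, g x y := by
    refine integral_congr_ae (ae_restrict_of_ae_restrict_of_subset hA ?_)
    filter_upwards [h] with x hx
    exact integral_congr_ae (ae_restrict_of_ae_restrict_of_subset hB hx)
  unfold cutNorm
  congr 1
  ext r
  constructor <;> rintro ⟨A, B, hA, hB, hAI, hBI, rfl⟩ <;>
    exact ⟨A, B, hA, hB, hAI, hBI, by rw [eq hAI hBI]⟩

lemma cutNorm_comp_le (hf : Integrable (Function.uncurry f) (mu01.prod mu01)) {σ : ℝ ≃ᵐ ℝ}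
    (hσ : MeasurePreserving σ mu01 mu01) : cutNorm (fun x y => f (σ x) (σ y)) ≤ cutNorm f := by
  refine cutNorm_le fun A B hA hB => ?_
  have change_var (C : Set ℝ) (h : ℝ → ℝ) :
      ∫ x in C, h (σ x) ∂mu01 = ∫ y in σ.symm ⁻¹' C, h y ∂mu01 := by
    rw [← hσ.setIntegral_preimage_emb σ.measurableEmbedding h, σ.preimage_symm,
      preimage_image_eq _ σ.injective]
  simp only [change_var]
  rw [change_var A fun x => ∫ y in σ.symm ⁻¹' B, f x y ∂mu01]
  exact le_cutNorm hf (σ.symm.measurable hA) (σ.symm.measurable hB)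

lemma integral_mul_le_setIntegral_nonneg {α : Type*} [MeasurableSpace α] {μ : Measure α}
    {h a : α → ℝ} (hh : Measurable h) (hhi : Integrable h μ) (ha : Measurable a)
    (ha01 : ∀ x, a x ∈ Icc (0 : ℝ) 1) :
    ∫ x, h x * a x ∂μ ≤ ∫ x in {x | 0 ≤ h x}, h x ∂μ := by
  have pos_set : MeasurableSet {x | 0 ≤ h x} := measurableSet_le measurable_const hh
  rw [← integral_indicator pos_set]
  refine integral_mono (integrable_mul_of_mem_Icc hhi ha ha01) (hhi.indicator pos_set)
    fun x => ?_
  obtain ⟨ha0, ha1⟩ := ha01 x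
  by_cases hx : 0 ≤ h x
  · simpa [indicator, hx] using mul_le_of_le_one_right hx ha1
  · simpa [indicator, hx] using mul_nonpos_of_nonpos_of_nonneg (not_le.1 hx).le ha0

lemma integral_mul_test_le {M : ℝ} (hf : Measurable (Function.uncurry f))
    (hfi : Integrable (Function.uncurry f) (mu01.prod mu01))
    (hM : ∀ A B, MeasurableSet A → MeasurableSet B →
      ∫ x in A, ∫ y in B, f x y ∂mu01 ∂mu01 ≤ M)
    {a b : ℝ → ℝ} (ha : Measurable a) (ha01 : ∀ x, a x ∈ Icc (0 : ℝ) 1)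
    (hb : Measurable b) (hb01 : ∀ x, b x ∈ Icc (0 : ℝ) 1) :
    ∫ x, ∫ y, f x y * (a x * b y) ∂mu01 ∂mu01 ≤ M := by
  have fb_integrable : Integrable (Function.uncurry fun x y => f x y * b y) (mu01.prod mu01) :=
    integrable_mul_of_mem_Icc hfi (hb.comp measurable_snd) fun p => hb01 p.2
  have restrict_left (A : Set ℝ) {h : ℝ × ℝ → ℝ} (hh : Integrable h (mu01.prod mu01)) :
      Integrable h ((mu01.restrict A).prod mu01) :=
    hh.mono_measure (Measure.prod_mono Measure.restrict_le_self le_rfl)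
  set A : Set ℝ := {x | 0 ≤ ∫ y, f x y * b y ∂mu01}
  set B : Set ℝ := {y | 0 ≤ ∫ x in A, f x y ∂mu01}
  have rows : Measurable fun x => ∫ y, f x y * b y ∂mu01 :=
    (StronglyMeasurable.integral_prod_right (f := fun x y => f x y * b y)
      (hf.mul (hb.comp measurable_snd)).stronglyMeasurable).measurable
  have columns : Measurable fun y => ∫ x in A, f x y ∂mu01 :=
    (StronglyMeasurable.integral_prod_left (f := f) hf.stronglyMeasurable).measurable
  calc ∫ x, ∫ y, f x y * (a x * b y) ∂mu01 ∂mu01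
      = ∫ x, (∫ y, f x y * b y ∂mu01) * a x ∂mu01 := by
        simp only [← integral_mul_const, mul_assoc, mul_comm (b _)]
    _ ≤ ∫ x in A, ∫ y, f x y * b y ∂mu01 ∂mu01 :=
        integral_mul_le_setIntegral_nonneg rows fb_integrable.integral_prod_left ha ha01
    _ = ∫ y, (∫ x in A, f x y ∂mu01) * b y ∂mu01 := by
        rw [integral_integral_swap (restrict_left A fb_integrable)]
        simp only [integral_mul_const]
    _ ≤ ∫ y in B, ∫ x in A, f x y ∂mu01 ∂mu01 :=
        integral_mul_le_setIntegral_nonneg columns (restrict_left A hfi).integral_prod_right hb hb01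
    _ = ∫ x in A, ∫ y in B, f x y ∂mu01 ∂mu01 :=
        (integral_integral_swap (hfi.mono_measure
          (Measure.prod_mono Measure.restrict_le_self Measure.restrict_le_self))).symm
    _ ≤ M := hM A B (measurableSet_le measurable_const rows)
        (measurableSet_le measurable_const columns)

lemma abs_integral_mul_test_le_cutNorm (hf : Measurable (Function.uncurry f))
    (hfi : Integrable (Function.uncurry f) (mu01.prod mu01)) {a b : ℝ → ℝ}
    (ha : Measurable a) (ha01 : ∀ x, a x ∈ Icc (0 : ℝ) 1)
    (hb : Measurable b) (hb01 : ∀ x, b x ∈ Icc (0 : ℝ) 1) :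
    |∫ x, ∫ y, f x y * (a x * b y) ∂mu01 ∂mu01| ≤ cutNorm f := by
  refine abs_le'.2 ⟨integral_mul_test_le hf hfi (fun A B hA hB =>
    (le_abs_self _).trans (le_cutNorm hfi hA hB)) ha ha01 hb hb01, ?_⟩
  simpa only [neg_mul, integral_neg] using
    integral_mul_test_le (f := fun x y => -f x y) hf.neg hfi.neg (fun A B hA hB => by
      simpa only [integral_neg] using (neg_le_abs _).trans (le_cutNorm hfi hA hB)) ha ha01 hb hb01

end CutNorm

/-! ### The counting lemma -/

section ProductMeasure

variable {V : Type*} [Fintype V] [DecidableEq V] {α : V → Type*} [∀ v, MeasurableSpace (α v)]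
  (μ : ∀ v, Measure (α v)) [∀ v, IsProbabilityMeasure (μ v)]

lemma measurePreserving_update (u : V) :
    MeasurePreserving (fun p : (∀ v, α v) × α u => Function.update p.1 u p.2)
      ((Measure.pi μ).prod (μ u)) (Measure.pi μ) := by
  refine ⟨measurable_update', (Measure.pi_eq fun s hs => ?_).symm⟩
  have preimage : (fun p : (∀ v, α v) × α u => Function.update p.1 u p.2) ⁻¹' univ.pi s =
      univ.pi (Function.update s u univ) ×ˢ s u := by
    ext p
    simp only [mem_preimage, mem_univ_pi, mem_prod]
    rw [Function.forall_update_iff p.1 (p := fun v t => t ∈ s v),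
      Function.forall_update_iff s (p := fun v t => p.1 v ∈ t)]
    simp [and_comm]
  rw [Measure.map_apply measurable_update' (.univ_pi hs), preimage, Measure.prod_prod,
    Measure.pi_pi, ← Finset.prod_erase_mul _ _ (Finset.mem_univ u),
    ← Finset.prod_erase_mul _ (fun v => μ v (s v)) (Finset.mem_univ u), Function.update_self,
    measure_univ, mul_one]
  congr 1
  exact Finset.prod_congr rfl fun v hv => by rw [Function.update_of_ne (Finset.ne_of_mem_erase hv)]

variable {μ}

lemma integrable_integral_update (u : V) {F : (∀ v, α v) → ℝ} (hF : Integrable F (Measure.pi μ)) :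
    Integrable (fun x => ∫ t, F (Function.update x u t) ∂μ u) (Measure.pi μ) :=
  ((measurePreserving_update μ u).integrable_comp_of_integrable hF).integral_prod_left

lemma integral_integral_update (u : V) {F : (∀ v, α v) → ℝ} (hF : Integrable F (Measure.pi μ)) :
    ∫ x, ∫ t, F (Function.update x u t) ∂μ u ∂Measure.pi μ = ∫ x, F x ∂Measure.pi μ := by
  have resample := measurePreserving_update μ u
  have hF' : AEStronglyMeasurable F
      (((Measure.pi μ).prod (μ u)).map fun p => Function.update p.1 u p.2) :=
    resample.map_eq.symm ▸ hF.aestronglyMeasurable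
  calc ∫ x, ∫ t, F (Function.update x u t) ∂μ u ∂Measure.pi μ
      = ∫ p, F (Function.update p.1 u p.2) ∂(Measure.pi μ).prod (μ u) :=
        (integral_prod _ (resample.integrable_comp_of_integrable hF)).symm
    _ = ∫ x, F x ∂Measure.pi μ := by
        rw [← integral_map resample.measurable.aemeasurable hF', resample.map_eq]

end ProductMeasure

lemma abs_integral_le_of_forall_abs_le {α : Type*} [MeasurableSpace α] {μ : Measure α}
    [IsProbabilityMeasure μ] {f : α → ℝ} {C : ℝ} (h : ∀ x, |f x| ≤ C) : |∫ x, f x ∂μ| ≤ C := by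
  simpa using norm_integral_le_of_norm_le_const (μ := μ) (f := f) (Eventually.of_forall h)

/-- A test function: a measurable function with values in `[0, 1]`. -/
structure IsTestFun {α : Type*} [MeasurableSpace α] (R : α → ℝ) : Prop where
  measurable : Measurable R
  mem_Icc : ∀ x, R x ∈ Icc (0 : ℝ) 1

namespace IsTestFun

variable {α β : Type*} [MeasurableSpace α] [MeasurableSpace β] {R R' : α → ℝ}

lemma one : IsTestFun fun _ : α => (1 : ℝ) := ⟨measurable_const, fun _ => unitInterval.one_mem⟩

lemma mul (h : IsTestFun R) (h' : IsTestFun R') : IsTestFun fun x => R x * R' x :=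
  ⟨h.measurable.mul h'.measurable, fun x => unitInterval.mul_mem (h.mem_Icc x) (h'.mem_Icc x)⟩

lemma prod {κ : Type*} {F : Finset κ} {R : κ → α → ℝ} (h : ∀ k ∈ F, IsTestFun (R k)) :
    IsTestFun fun x => ∏ k ∈ F, R k x :=
  ⟨Finset.measurable_prod _ fun k hk => (h k hk).measurable,
    fun x => unitInterval.prod_mem fun k hk => (h k hk).mem_Icc x⟩

lemma comp (h : IsTestFun R) {g : β → α} (hg : Measurable g) : IsTestFun fun x => R (g x) :=
  ⟨h.measurable.comp hg, fun _ => h.mem_Icc _⟩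

lemma ite {p : α → Prop} [DecidablePred p] (hp : MeasurableSet {x | p x}) :
    IsTestFun fun x => if p x then (1 : ℝ) else 0 :=
  ⟨.ite hp measurable_const measurable_const, fun _ => by
    split_ifs
    exacts [unitInterval.one_mem, unitInterval.zero_mem]⟩

lemma integrable (h : IsTestFun R) (μ : Measure α) [IsFiniteMeasure μ] : Integrable R μ :=
  integrable_of_mem_Icc h.measurable h.mem_Icc

end IsTestFun

section Splits

variable {V : Type*} {u v : V} {R R' : (V → ℝ) → ℝ}

/-- `R` is a product of two test functions, one of which does not depend on the coordinate `v` and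
the other does not depend on the coordinate `u`. -/
def Splits (u v : V) (R : (V → ℝ) → ℝ) : Prop :=
  ∃ a b : (V → ℝ) → ℝ, IsTestFun a ∧ IsTestFun b ∧ DependsOn a {v}ᶜ ∧ DependsOn b {u}ᶜ ∧
    R = fun x => a x * b x

namespace Splits

lemma isTestFun (h : Splits u v R) : IsTestFun R := by
  obtain ⟨a, b, ha, hb, -, -, rfl⟩ := h
  exact ha.mul hb

lemma of_dependsOn_left (hR : IsTestFun R) (h : DependsOn R {v}ᶜ) : Splits u v R :=
  ⟨R, fun _ => 1, hR, .one, h, (dependsOn_const 1).mono (empty_subset _), by simp⟩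

lemma of_dependsOn_right (hR : IsTestFun R) (h : DependsOn R {u}ᶜ) : Splits u v R :=
  ⟨fun _ => 1, R, .one, hR, (dependsOn_const 1).mono (empty_subset _), h, by simp⟩

lemma mul (h : Splits u v R) (h' : Splits u v R') : Splits u v fun x => R x * R' x := by
  obtain ⟨a, b, ha, hb, hav, hbu, rfl⟩ := h
  obtain ⟨a', b', ha', hb', hav', hbu', rfl⟩ := h'
  exact ⟨_, _, ha.mul ha', hb.mul hb', fun x y hxy => by simp only [hav hxy, hav' hxy],
    fun x y hxy => by simp only [hbu hxy, hbu' hxy], funext fun x => by ring⟩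

lemma prod {κ : Type*} {F : Finset κ} {R : κ → (V → ℝ) → ℝ} (h : ∀ k ∈ F, Splits u v (R k)) :
    Splits u v fun x => ∏ k ∈ F, R k x := by
  induction F using Finset.cons_induction with
  | empty => simpa using of_dependsOn_left .one ((dependsOn_const 1).mono (empty_subset _))
  | cons k F hk ih =>
    simp only [Finset.prod_cons]
    exact (h k (Finset.mem_cons_self _ _)).mul (ih fun l hl => h l (Finset.mem_cons_of_mem hl))

end Splits

end Splits

namespace Graphon

variable {V : Type*} (W W' : Graphon)

lemma isTestFun_uncurry : IsTestFun (Function.uncurry W.W) :=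
  ⟨W.measurable, fun p => ⟨W.nonneg p.1 p.2, W.le_one p.1 p.2⟩⟩

lemma integrable_sub : Integrable (Function.uncurry fun x y => W.W x y - W'.W x y)
    (mu01.prod mu01) :=
  (W.isTestFun_uncurry.integrable _).sub (W'.isTestFun_uncurry.integrable _)

/-- The value of the kernel on the pair `e` of sample indices under the sample `x`. -/
def edge (x : V → ℝ) : Sym2 V → ℝ :=
  Sym2.lift ⟨fun u v => W.W (x u) (x v), fun _ _ => W.symm _ _⟩

lemma isTestFun_edge (e : Sym2 V) : IsTestFun fun x : V → ℝ => W.edge x e := by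
  induction e with
  | _ u v => exact W.isTestFun_uncurry.comp (g := fun x : V → ℝ => (x u, x v)) (by fun_prop)

lemma dependsOn_edge {e : Sym2 V} {v : V} (hv : v ∉ e) :
    DependsOn (fun x : V → ℝ => W.edge x e) {v}ᶜ := by
  induction e with
  | _ p q =>
    rw [Sym2.mem_iff, not_or] at hv
    intro x y hxy
    simp only [edge, Sym2.lift_mk, hxy p (Ne.symm hv.1), hxy q (Ne.symm hv.2)]

lemma splits_edge {u v : V} (huv : u ≠ v) {e : Sym2 V} (he : e ≠ s(u, v)) :
    Splits u v fun x => W.edge x e := by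
  by_cases hv : v ∈ e
  · have hu : u ∉ e := fun hu => he ((Sym2.mem_and_mem_iff huv).1 ⟨hu, hv⟩)
    exact .of_dependsOn_right (W.isTestFun_edge e) (W.dependsOn_edge hu)
  · exact .of_dependsOn_left (W.isTestFun_edge e) (W.dependsOn_edge hv)

variable {R : (V → ℝ) → ℝ}

lemma abs_integral_sub_mul_update_le [DecidableEq V] {u v : V} (huv : u ≠ v) (hR : Splits u v R)
    (x : V → ℝ) :
    |∫ s, ∫ t, (W.W s t - W'.W s t) * R (Function.update (Function.update x u s) v t)
        ∂mu01 ∂mu01| ≤ cutNorm fun x y => W.W x y - W'.W x y := by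
  obtain ⟨a, b, ha, hb, hav, hbu, rfl⟩ := hR
  have ha_update (s t : ℝ) :
      a (Function.update (Function.update x u s) v t) = a (Function.update x u s) :=
    hav fun i hi => Function.update_of_ne hi _ _
  have hb_update (s t : ℝ) :
      b (Function.update (Function.update x u s) v t) = b (Function.update x v t) := by
    rw [Function.update_comm huv]
    exact hbu fun i hi => Function.update_of_ne hi _ _
  simp only [ha_update, hb_update]
  have ha' := ha.comp (g := Function.update x u) (measurable_update x)
  have hb' := hb.comp (g := Function.update x v) (measurable_update x)
  exact abs_integral_mul_test_le_cutNorm (f := fun x y => W.W x y - W'.W x y)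
    (W.measurable.sub W'.measurable) (W.integrable_sub W') ha'.measurable ha'.mem_Icc
    hb'.measurable hb'.mem_Icc

variable [Fintype V]

lemma abs_integral_edge_sub_edge_mul_le {u v : V} (huv : u ≠ v) (hR : Splits u v R) :
    |∫ x, (W.edge x s(u, v) - W'.edge x s(u, v)) * R x ∂Measure.pi fun _ => mu01| ≤
      cutNorm fun x y => W.W x y - W'.W x y := by
  classical
  have integrable : Integrable (fun x => (W.edge x s(u, v) - W'.edge x s(u, v)) * R x)
      (Measure.pi fun _ => mu01) :=
    integrable_mul_of_mem_Icc (((W.isTestFun_edge _).integrable _).sub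
      ((W'.isTestFun_edge _).integrable _)) hR.isTestFun.measurable hR.isTestFun.mem_Icc
  rw [← integral_integral_update v integrable,
    ← integral_integral_update u (integrable_integral_update v integrable)]
  simp only [edge, Sym2.lift_mk, Function.update_self, Function.update_of_ne huv]
  exact abs_integral_le_of_forall_abs_le (W.abs_integral_sub_mul_update_le W' huv hR)

lemma abs_integral_prod_edge_sub_le {T : Finset (Sym2 V)} (hT : ∀ e ∈ T, ¬ e.IsDiag)
    (hR : ∀ u v, s(u, v) ∈ T → Splits u v R) :
    |∫ x, (∏ e ∈ T, W.edge x e) * R x ∂(Measure.pi fun _ => mu01) -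
        ∫ x, (∏ e ∈ T, W'.edge x e) * R x ∂(Measure.pi fun _ => mu01)| ≤
      T.card * cutNorm fun x y => W.W x y - W'.W x y := by
  have ne {u v : V} {F : Finset (Sym2 V)} (hF : ∀ e ∈ F, ¬ e.IsDiag) (h : s(u, v) ∈ F) : u ≠ v :=
    fun huv => hF _ h huv
  induction T using Finset.cons_induction generalizing R with
  | empty => simp
  | cons e T he ih =>
    have rest := ih (R := fun x => W.edge x e * R x)
      (fun e' he' => hT e' (Finset.mem_cons_of_mem he')) fun u v huv =>
        (W.splits_edge (ne hT (Finset.mem_cons_of_mem huv)) (by rintro rfl; exact he huv)).mul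
          (hR u v (Finset.mem_cons_of_mem huv))
    induction e with
    | _ u v =>
    have huv := ne hT (Finset.mem_cons_self s(u, v) T)
    have hRT : Splits u v fun x => (∏ e ∈ T, W'.edge x e) * R x :=
      (Splits.prod fun e' he' => W'.splits_edge huv (by rintro rfl; exact he he')).mul
        (hR u v (Finset.mem_cons_self _ _))
    have one_edge := W.abs_integral_edge_sub_edge_mul_le W' huv hRT
    have integrable (U : Graphon) :
        Integrable (fun x => U.edge x s(u, v) * ((∏ e ∈ T, W'.edge x e) * R x))
          (Measure.pi fun _ => mu01) := ((U.isTestFun_edge _).mul hRT.isTestFun).integrable _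
    simp only [sub_mul] at one_edge
    rw [integral_sub (integrable W) (integrable W')] at one_edge
    simp only [Finset.prod_cons, Finset.card_cons, Nat.cast_succ, add_one_mul]
    simp only [mul_assoc, mul_left_comm _ (∏ e ∈ T, W.edge _ e)] at rest one_edge ⊢
    simp only [mul_left_comm (∏ e ∈ T, W'.edge _ e)] at rest
    exact (abs_sub_le _ _ _).trans (add_le_add rest one_edge)

end Graphon

section Coloring

variable {S : Type*} {c c' c'' : ℝ → S}

lemma measurableSet_ne [Finite S] (hc : ∀ s, MeasurableSet (c ⁻¹' {s}))
    (hc' : ∀ s, MeasurableSet (c' ⁻¹' {s})) : MeasurableSet {t | c t ≠ c' t} := by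
  have : {t | c t ≠ c' t} = ⋃ s, (c ⁻¹' {s} \ c' ⁻¹' {s}) := by
    ext t
    simp [eq_comm]
  rw [this]
  exact .iUnion fun s => (hc s).diff (hc' s)

variable [Fintype S]

lemma colorDist_nonneg (c c' : ℝ → S) : 0 ≤ colorDist c c' :=
  Finset.sum_nonneg fun _ _ => ENNReal.toReal_nonneg

lemma colorDist_eq_sum_mu01 (hc : ∀ s, MeasurableSet (c ⁻¹' {s}))
    (hc' : ∀ s, MeasurableSet (c' ⁻¹' {s})) :
    colorDist c c' = ∑ s, mu01.real ((c ⁻¹' {s}) ∆ (c' ⁻¹' {s})) := by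
  refine Finset.sum_congr rfl fun s _ => ?_
  rw [measureReal_def, mu01, Measure.restrict_apply ((hc s).symmDiff (hc' s)),
    ← inter_symmDiff_distrib_left, inter_comm]

lemma colorDist_triangle (hc : ∀ s, MeasurableSet (c ⁻¹' {s}))
    (hc' : ∀ s, MeasurableSet (c' ⁻¹' {s})) (hc'' : ∀ s, MeasurableSet (c'' ⁻¹' {s})) :
    colorDist c c'' ≤ colorDist c c' + colorDist c' c'' := by
  rw [colorDist_eq_sum_mu01 hc hc'', colorDist_eq_sum_mu01 hc hc', colorDist_eq_sum_mu01 hc' hc'',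
    ← Finset.sum_add_distrib]
  exact Finset.sum_le_sum fun s _ => measureReal_symmDiff_le _

lemma colorDist_comm (c c' : ℝ → S) : colorDist c c' = colorDist c' c := by
  simp only [colorDist, symmDiff_comm]

lemma colorDist_comp (hc : ∀ s, MeasurableSet (c ⁻¹' {s})) (hc' : ∀ s, MeasurableSet (c' ⁻¹' {s}))
    {σ : ℝ → ℝ} (hσ : MeasurePreserving σ mu01 mu01) :
    colorDist (c ∘ σ) (c' ∘ σ) = colorDist c c' := by
  rw [colorDist_eq_sum_mu01 hc hc', colorDist_eq_sum_mu01 (c := c ∘ σ) (c' := c' ∘ σ)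
    (fun s => hσ.measurable (hc s)) fun s => hσ.measurable (hc' s)]
  refine Finset.sum_congr rfl fun s _ => ?_
  simp only [preimage_comp, ← preimage_symmDiff, measureReal_def]
  rw [hσ.measure_preimage ((hc s).symmDiff (hc' s)).nullMeasurableSet]

lemma mu01_ne_le_colorDist (hc : ∀ s, MeasurableSet (c ⁻¹' {s}))
    (hc' : ∀ s, MeasurableSet (c' ⁻¹' {s})) : mu01.real {t | c t ≠ c' t} ≤ colorDist c c' := by
  rw [colorDist_eq_sum_mu01 hc hc']
  exact (measureReal_mono fun t ht => mem_iUnion.2 ⟨c t, .inl ⟨rfl, fun h => ht (Eq.symm h)⟩⟩).trans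
    (measureReal_iUnion_fintype_le _)

lemma colorDist_le_two_mul_mu01_ne (hc : ∀ s, MeasurableSet (c ⁻¹' {s}))
    (hc' : ∀ s, MeasurableSet (c' ⁻¹' {s})) :
    colorDist c c' ≤ 2 * mu01.real {t | c t ≠ c' t} := by
  have classes {d : ℝ → S} (hd : ∀ s, MeasurableSet (d ⁻¹' {s})) :
      ∑ s, mu01.real (d ⁻¹' {s} ∩ {t | c t ≠ c' t}) = mu01.real {t | c t ≠ c' t} := by
    have := sum_measureReal_preimage_singleton (μ := mu01.restrict {t | c t ≠ c' t}) Finset.univ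
      fun s _ => hd s
    simpa only [measureReal_restrict_apply (hd _), Finset.coe_univ, preimage_univ,
      measureReal_restrict_apply_univ] using this
  calc colorDist c c' = ∑ s, mu01.real ((c ⁻¹' {s}) ∆ (c' ⁻¹' {s})) := colorDist_eq_sum_mu01 hc hc'
    _ ≤ ∑ s, (mu01.real (c ⁻¹' {s} ∩ {t | c t ≠ c' t}) +
          mu01.real (c' ⁻¹' {s} ∩ {t | c t ≠ c' t})) := by
        refine Finset.sum_le_sum fun s _ =>
          (measureReal_mono fun t ht => ?_).trans (measureReal_union_le _ _)
        rcases ht with ⟨hts, hts'⟩ | ⟨hts', hts⟩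
        · exact .inl ⟨hts, fun h => hts' (h.symm.trans hts)⟩
        · exact .inr ⟨hts', fun h => hts (h.trans hts')⟩
    _ = 2 * mu01.real {t | c t ≠ c' t} := by
        rw [Finset.sum_add_distrib, classes hc, classes hc', two_mul]

end Coloring

section ColorIndicator

variable {V S : Type*} [Fintype V] [DecidableEq S] {c c' : ℝ → S}

lemma isTestFun_colorInd (hc : ∀ s, MeasurableSet (c ⁻¹' {s})) (cT : V → S) :
    IsTestFun (colorInd c cT) :=
  .prod fun v _ => (IsTestFun.ite (p := fun t => c t = cT v) (hc (cT v))).comp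
    (measurable_pi_apply v)

lemma splits_colorInd (hc : ∀ s, MeasurableSet (c ⁻¹' {s})) (cT : V → S) {u v : V} (huv : u ≠ v) :
    Splits u v (colorInd c cT) := by
  refine .prod fun w _ => ?_
  have test : IsTestFun fun x : V → ℝ => if c (x w) = cT w then (1 : ℝ) else 0 :=
    (IsTestFun.ite (p := fun t => c t = cT w) (hc (cT w))).comp (measurable_pi_apply w)
  have dependsOn {w' : V} (h : w ≠ w') :
      DependsOn (fun x : V → ℝ => if c (x w) = cT w then (1 : ℝ) else 0) {w'}ᶜ :=
    fun x y hxy => by simp only [hxy w h]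
  by_cases hw : w = v
  · exact .of_dependsOn_right test (dependsOn fun h => huv (h.symm.trans hw))
  · exact .of_dependsOn_left test (dependsOn hw)

lemma abs_colorInd_sub_le (c c' : ℝ → S) (cT : V → S) (x : V → ℝ) :
    |colorInd c cT x - colorInd c' cT x| ≤ ∑ v, if c (x v) ≠ c' (x v) then (1 : ℝ) else 0 := by
  by_cases h : ∀ v, c (x v) = c' (x v)
  · simp [colorInd, h]
  · obtain ⟨v, hv⟩ := not_forall.1 h
    calc |colorInd c cT x - colorInd c' cT x| ≤ 1 := by
          simp only [colorInd_eq_ite]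
          split_ifs <;> norm_num
      _ = if c (x v) ≠ c' (x v) then (1 : ℝ) else 0 := by rw [if_pos hv]
      _ ≤ ∑ v, if c (x v) ≠ c' (x v) then (1 : ℝ) else 0 :=
          Finset.single_le_sum (f := fun v => if c (x v) ≠ c' (x v) then (1 : ℝ) else 0)
            (fun v _ => by positivity) (Finset.mem_univ v)

lemma abs_integral_mul_colorInd_sub_le [Finite S] (hc : ∀ s, MeasurableSet (c ⁻¹' {s}))
    (hc' : ∀ s, MeasurableSet (c' ⁻¹' {s})) (cT : V → S) {R : (V → ℝ) → ℝ} (hR : IsTestFun R) :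
    |∫ x, R x * colorInd c cT x ∂(Measure.pi fun _ => mu01) -
        ∫ x, R x * colorInd c' cT x ∂(Measure.pi fun _ => mu01)| ≤
      Fintype.card V * mu01.real {t | c t ≠ c' t} := by
  have test := hR.mul (isTestFun_colorInd hc cT)
  have test' := hR.mul (isTestFun_colorInd hc' cT)
  have ne_test := IsTestFun.ite (measurableSet_ne hc hc')
  have ne_integrable (v : V) :
      Integrable (fun x : V → ℝ => if c (x v) ≠ c' (x v) then (1 : ℝ) else 0)
        (Measure.pi fun _ => mu01) := (ne_test.comp (measurable_pi_apply v)).integrable _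
  rw [← integral_sub (test.integrable _) (test'.integrable _)]
  calc |∫ x, R x * colorInd c cT x - R x * colorInd c' cT x ∂Measure.pi fun _ => mu01|
      ≤ ∫ x, |R x * colorInd c cT x - R x * colorInd c' cT x| ∂(Measure.pi fun _ => mu01) :=
        abs_integral_le_integral_abs
    _ ≤ ∫ x, ∑ v, (if c (x v) ≠ c' (x v) then (1 : ℝ) else 0) ∂(Measure.pi fun _ => mu01) := by
        refine integral_mono ((test.integrable _).sub (test'.integrable _)).abs
          (integrable_finsetSum Finset.univ fun v _ => ne_integrable v) fun x => ?_
        dsimp only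
        rw [← mul_sub, abs_mul, abs_of_nonneg (hR.mem_Icc x).1]
        exact (mul_le_of_le_one_left (abs_nonneg _) (hR.mem_Icc x).2).trans
          (abs_colorInd_sub_le c c' cT x)
    _ = ∑ _v : V, ∫ t, (if c t ≠ c' t then (1 : ℝ) else 0) ∂mu01 := by
        rw [integral_finsetSum _ fun v _ => ne_integrable v]
        exact Finset.sum_congr rfl fun v _ =>
          integral_comp_eval (μ := fun _ : V => mu01) (i := v)
            ne_test.measurable.aestronglyMeasurable
    _ = Fintype.card V * mu01.real {t | c t ≠ c' t} := by
        rw [Finset.sum_const, Finset.card_univ, nsmul_eq_mul,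
          ← integral_indicator_one (measurableSet_ne hc hc')]
        simp only [indicator, mem_ofPred_eq, Pi.one_apply]

end ColorIndicator

namespace CGraphon

variable {S V : Type*} (W W' W'' : CGraphon S)

/-- The pull-back `W^σ` of a colored graphon under a measurable map `σ`. -/
def comp {σ : ℝ → ℝ} (hσ : Measurable σ) : CGraphon S where
  K :=
    { W := fun x y => W.K.W (σ x) (σ y)
      measurable := W.K.measurable.comp (hσ.prodMap hσ)
      symm := fun _ _ => W.K.symm _ _
      nonneg := fun _ _ => W.K.nonneg _ _
      le_one := fun _ _ => W.K.le_one _ _ }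
  c := W.c ∘ σ
  measC s := hσ (W.measC s)

section Hom

lemma isTestFun_prod_edge (T : Finset (Sym2 V)) :
    IsTestFun fun x : V → ℝ => ∏ e ∈ T, W.K.edge x e :=
  .prod fun e _ => W.K.isTestFun_edge e

variable [Fintype V] [DecidableEq S]

/-- The colored homomorphism density of the colored graph with edge set `T` and coloring `cT`. -/
def hom (T : Finset (Sym2 V)) (cT : V → S) : ℝ :=
  ∫ x, (∏ e ∈ T, W.K.edge x e) * colorInd W.c cT x ∂Measure.pi fun _ => mu01

lemma tS_eq_hom {V : Type} [Fintype V] [DecidableEq V] (H : SimpleGraph V) [DecidableRel H.Adj]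
    (cH : V → S) : tS H cH W = W.hom H.edgeFinset cH := rfl

lemma isTestFun_hom (T : Finset (Sym2 V)) (cT : V → S) :
    IsTestFun fun x => (∏ e ∈ T, W.K.edge x e) * colorInd W.c cT x :=
  (W.isTestFun_prod_edge T).mul (isTestFun_colorInd W.measC cT)

lemma hom_comp {σ : ℝ → ℝ} (hσ : MeasurePreserving σ mu01 mu01) (T : Finset (Sym2 V))
    (cT : V → S) : (W.comp hσ.measurable).hom T cT = W.hom T cT := by
  have hpi := measurePreserving_pi (fun _ : V => mu01) (fun _ : V => mu01) (f := fun _ => σ)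
    fun _ => hσ
  have edge_comp (x : V → ℝ) (e : Sym2 V) :
      (W.comp hσ.measurable).K.edge x e = W.K.edge (fun v => σ (x v)) e := by
    induction e with
    | _ u v => rfl
  conv_rhs => rw [hom, ← hpi.map_eq, integral_map hpi.measurable.aemeasurable
    (W.isTestFun_hom T cT).measurable.aestronglyMeasurable]
  simp only [hom, edge_comp]
  rfl

end Hom

section CutDist

variable [Fintype S]

/-- The colored cut distance `‖W − W'‖_□^S` of two colored graphons, without rearrangement. -/
def cutDist : ℝ := cutNorm (fun x y => W.K.W x y - W'.K.W x y) + colorDist W.c W'.c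

lemma cutDist_nonneg : 0 ≤ W.cutDist W' := add_nonneg (cutNorm_nonneg _) (colorDist_nonneg _ _)

lemma cutDist_triangle : W.cutDist W'' ≤ W.cutDist W' + W'.cutDist W'' := by
  have kernel := cutNorm_add_le (W.K.integrable_sub W'.K) (W'.K.integrable_sub W''.K)
  have color := colorDist_triangle W.measC W'.measC W''.measC
  simp only [sub_add_sub_cancel] at kernel
  unfold cutDist
  linarith

lemma cutDist_comm : W.cutDist W' = W'.cutDist W := by
  unfold cutDist
  rw [colorDist_comm, ← cutNorm_neg]
  simp only [neg_sub]

lemma cutDist_comp_le {σ : ℝ ≃ᵐ ℝ} (hσ : MeasurePreserving σ mu01 mu01) :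
    (W.comp hσ.measurable).cutDist (W'.comp hσ.measurable) ≤ W.cutDist W' :=
  add_le_add (cutNorm_comp_le (W.K.integrable_sub W'.K) hσ)
    (colorDist_comp W.measC W'.measC hσ).le

lemma abs_hom_sub_le [Fintype V] [DecidableEq S] {T : Finset (Sym2 V)} (hT : ∀ e ∈ T, ¬ e.IsDiag)
    (cT : V → S) :
    |W.hom T cT - W'.hom T cT| ≤ (T.card + Fintype.card V) * W.cutDist W' := by
  have kernel := W.K.abs_integral_prod_edge_sub_le W'.K hT fun u v huv =>
    splits_colorInd W.measC cT fun h => hT _ huv h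
  have color := abs_integral_mul_colorInd_sub_le W.measC W'.measC cT (W'.isTestFun_prod_edge T)
  calc |W.hom T cT - W'.hom T cT|
      ≤ T.card * cutNorm (fun x y => W.K.W x y - W'.K.W x y) +
          Fintype.card V * mu01.real {t | W.c t ≠ W'.c t} :=
        (abs_sub_le _ _ _).trans (add_le_add kernel color)
    _ ≤ T.card * W.cutDist W' + Fintype.card V * W.cutDist W' := by
        gcongr
        · exact le_add_of_nonneg_right (colorDist_nonneg _ _)
        · exact (mu01_ne_le_colorDist W.measC W'.measC).trans
            (le_add_of_nonneg_left (cutNorm_nonneg _))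
    _ = (T.card + Fintype.card V) * W.cutDist W' := (add_mul _ _ _).symm

lemma deltaCutS_le_cutDist {σ : ℝ → ℝ} (hσ : IsMPB σ) :
    deltaCutS W W' ≤ W.cutDist (W'.comp hσ.1) := by
  refine csInf_le ⟨0, ?_⟩ ⟨σ, hσ, rfl⟩
  rintro r ⟨σ, -, rfl⟩
  exact add_nonneg (cutNorm_nonneg _) (colorDist_nonneg _ _)

lemma exists_cutDist_lt_of_deltaCutS_lt {ε : ℝ} (h : deltaCutS W W' < ε) :
    ∃ (σ : ℝ → ℝ) (hσ : IsMPB σ), W.cutDist (W'.comp hσ.1) < ε := by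
  have isMPB_id : IsMPB id := ⟨measurable_id, bijOn_id _, .id _⟩
  obtain ⟨_, ⟨σ, hσ, rfl⟩, hlt⟩ := exists_lt_of_csInf_lt (by exact ⟨_, id, isMPB_id, rfl⟩) h
  exact ⟨σ, hσ, hlt⟩

lemma abs_tS_sub_le_of_deltaCutS_lt [DecidableEq S] {V : Type} [Fintype V] [DecidableEq V]
    (H : SimpleGraph V) [DecidableRel H.Adj] (cH : V → S) {ε : ℝ} (h : deltaCutS W W' < ε) :
    |tS H cH W - tS H cH W'| ≤ (H.edgeFinset.card + Fintype.card V) * ε := by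
  obtain ⟨σ, hσ, hlt⟩ := W.exists_cutDist_lt_of_deltaCutS_lt W' h
  have not_isDiag : ∀ e ∈ H.edgeFinset, ¬ e.IsDiag := fun e he =>
    H.not_isDiag_of_mem_edgeSet (SimpleGraph.mem_edgeFinset.1 he)
  rw [tS_eq_hom, tS_eq_hom, ← W'.hom_comp hσ.2.2]
  exact (W.abs_hom_sub_le _ not_isDiag cH).trans (by gcongr)

end CutDist

end CGraphon

theorem left_convergence_of_cauchy {S : Type*} [Fintype S] [DecidableEq S] {W : ℕ → CGraphon S}
    (hW : ∀ ε : ℝ, 0 < ε → ∃ N : ℕ, ∀ m ≥ N, ∀ n ≥ N, deltaCutS (W m) (W n) < ε)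
    {V : Type} [Fintype V] [DecidableEq V] (H : SimpleGraph V) [DecidableRel H.Adj] (cH : V → S) :
    ∃ L : ℝ, Tendsto (fun n => tS H cH (W n)) atTop (nhds L) := by
  refine cauchySeq_tendsto_of_complete (Metric.cauchySeq_iff.2 fun ε hε => ?_)
  set C : ℝ := H.edgeFinset.card + Fintype.card V
  have hC : 0 ≤ C := by positivity
  obtain ⟨N, hN⟩ := hW (ε / (C + 1)) (by positivity)
  refine ⟨N, fun m hm n hn => ?_⟩
  calc |tS H cH (W m) - tS H cH (W n)| ≤ C * (ε / (C + 1)) :=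
        (W m).abs_tS_sub_le_of_deltaCutS_lt (W n) H cH (hN m hm n hn)
    _ < (C + 1) * (ε / (C + 1)) := by gcongr; linarith
    _ = ε := by field_simp

/-! ### Step graphons and interval exchanges -/

section Cells

variable {N : ℕ}

/-- The interval `[i/N, (i+1)/N)`. -/
def cellSet (N : ℕ) (i : Fin N) : Set ℝ := Ico ((i : ℝ) / N) (((i : ℝ) + 1) / N)

lemma cellSet_subset_Ico (i : Fin N) : cellSet N i ⊆ Ico 0 1 := by
  have hi : ((i : ℕ) : ℝ) + 1 ≤ N := mod_cast i.2
  exact Ico_subset_Ico (by positivity) (div_le_one_of_le₀ hi (by positivity))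

lemma cellSet_eq_preimage_add (i j : Fin N) :
    cellSet N i = (fun x => x + ((j : ℝ) - (i : ℝ)) / N) ⁻¹' cellSet N j := by
  rw [cellSet, cellSet, preimage_add_const_Ico]
  congr 1 <;> ring

variable [NeZero N]

/-- The index of the interval `[i/N, (i+1)/N)` that contains `x ∈ [0, 1)`; it is meaningless for
`x` outside of `[0, 1)`. -/
def cell (N : ℕ) [NeZero N] (x : ℝ) : Fin N := Fin.ofNat N ⌊(N : ℝ) * x⌋₊

lemma measurable_cell : Measurable (cell N) :=
  (measurable_from_top (f := Fin.ofNat N)).comp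
    (Nat.measurable_floor.comp (measurable_const.mul measurable_id))

lemma cell_eq_iff_mem_cellSet {x : ℝ} (hx : x ∈ Ico (0 : ℝ) 1) (i : Fin N) :
    cell N x = i ↔ x ∈ cellSet N i := by
  have hN : (0 : ℝ) < N := mod_cast NeZero.pos N
  have hNx : 0 ≤ (N : ℝ) * x := mul_nonneg hN.le hx.1
  have floor_lt : ⌊(N : ℝ) * x⌋₊ < N := (Nat.floor_lt hNx).2 (mul_lt_of_lt_one_right hN hx.2)
  rw [cell, Fin.ext_iff, Fin.val_ofNat, Nat.mod_eq_of_lt floor_lt, Nat.floor_eq_iff hNx, cellSet,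
    mem_Ico, div_le_iff₀' hN, lt_div_iff₀' hN]

lemma mem_cellSet_cell {x : ℝ} (hx : x ∈ Ico (0 : ℝ) 1) : x ∈ cellSet N (cell N x) :=
  (cell_eq_iff_mem_cellSet hx _).1 rfl

lemma cell_of_mem_cellSet {x : ℝ} {i : Fin N} (hx : x ∈ cellSet N i) : cell N x = i :=
  (cell_eq_iff_mem_cellSet (cellSet_subset_Ico i hx) i).2 hx

lemma mu01_eq_restrict_Ico : mu01 = volume.restrict (Ico (0 : ℝ) 1) :=
  Measure.restrict_congr_set Ico_ae_eq_Icc.symm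

lemma ae_mem_Ico : ∀ᵐ x ∂mu01, x ∈ Ico (0 : ℝ) 1 :=
  mu01_eq_restrict_Ico ▸ ae_restrict_mem measurableSet_Ico

lemma mu01_eq_sum_restrict_cellSet (N : ℕ) [NeZero N] :
    mu01 = Measure.sum fun i : Fin N => volume.restrict (cellSet N i) := by
  have cover : ⋃ i, cellSet N i = Ico (0 : ℝ) 1 :=
    (iUnion_subset cellSet_subset_Ico).antisymm fun x hx => mem_iUnion.2 ⟨_, mem_cellSet_cell hx⟩
  rw [mu01_eq_restrict_Ico, ← cover]
  refine Measure.restrict_iUnion (fun i j hij => ?_) fun i => measurableSet_Ico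
  exact Set.disjoint_left.2 fun x hx hx' =>
    hij ((cell_of_mem_cellSet hx).symm.trans (cell_of_mem_cellSet hx'))

lemma mu01_cell (i : Fin N) : mu01 (cell N ⁻¹' {i}) = (N : ENNReal)⁻¹ := by
  have hN : (0 : ℝ) < N := mod_cast NeZero.pos N
  have preimage : cell N ⁻¹' {i} ∩ Ico 0 1 = cellSet N i := by
    ext x
    exact ⟨fun h => (cell_eq_iff_mem_cellSet h.2 i).1 h.1,
      fun h => ⟨cell_of_mem_cellSet h, cellSet_subset_Ico i h⟩⟩
  rw [mu01_eq_restrict_Ico, Measure.restrict_apply (measurable_cell (measurableSet_singleton i)),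
    preimage, cellSet, Real.volume_Ico, ← sub_div, add_sub_cancel_left, one_div,
    ENNReal.ofReal_inv_of_pos hN, ENNReal.ofReal_natCast]

lemma mu01_real_cell (i : Fin N) : mu01.real (cell N ⁻¹' {i}) = (N : ℝ)⁻¹ := by
  simp [measureReal_def, mu01_cell]

lemma integral_comp_cell (ν : Measure ℝ) [IsFiniteMeasure ν] (h : Fin N → ℝ) :
    ∫ y, h (cell N y) ∂ν = 𝔼 j, N * ν.real (cell N ⁻¹' {j}) * h j := by
  have hN : (N : ℝ) ≠ 0 := NeZero.ne _
  rw [← integral_map measurable_cell.aemeasurable (f := h) measurable_from_top.aestronglyMeasurable,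
    integral_fintype .of_finite, Finset.expect_eq_sum_div_card, Finset.sum_div]
  refine Finset.sum_congr rfl fun j _ => ?_
  rw [map_measureReal_apply measurable_cell (measurableSet_singleton j), smul_eq_mul,
    Finset.card_univ, Fintype.card_fin]
  field_simp

lemma integral_comp_cell_mu01 (h : Fin N → ℝ) : ∫ y, h (cell N y) ∂mu01 = 𝔼 j, h j := by
  simp [integral_comp_cell, mu01_real_cell]

lemma integral_pi_comp_cell {V : Type*} [Fintype V] [DecidableEq V] (h : (V → Fin N) → ℝ) :
    ∫ x, h (cell N ∘ x) ∂(Measure.pi fun _ => mu01) = 𝔼 z, h z := by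
  have measurable : Measurable fun x : V → ℝ => cell N ∘ x :=
    measurable_pi_iff.2 fun v => measurable_cell.comp (measurable_pi_apply v)
  have preimage (z : V → Fin N) :
      (fun x : V → ℝ => cell N ∘ x) ⁻¹' {z} = univ.pi fun v => cell N ⁻¹' {z v} := by
    ext x
    simp [funext_iff]
  rw [← integral_map measurable.aemeasurable (measurable_of_countable h).aestronglyMeasurable,
    integral_fintype .of_finite, Finset.expect_eq_sum_div_card, Finset.sum_div]
  refine Finset.sum_congr rfl fun z _ => ?_
  rw [map_measureReal_apply measurable (measurableSet_singleton z), preimage, measureReal_def,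
    Measure.pi_pi]
  simp [mu01_cell, div_eq_inv_mul]

/-- The map of `[0, 1)` that translates the `i`-th interval onto the `π i`-th. -/
def cellShift (π : Equiv.Perm (Fin N)) (x : ℝ) : ℝ :=
  if x ∈ Ico (0 : ℝ) 1 then x + ((π (cell N x) : ℝ) - (cell N x : ℝ)) / N else x

lemma cellShift_of_mem_cellSet (π : Equiv.Perm (Fin N)) {x : ℝ} {i : Fin N}
    (hx : x ∈ cellSet N i) : cellShift π x = x + ((π i : ℝ) - (i : ℝ)) / N := by
  rw [cellShift, if_pos (cellSet_subset_Ico i hx), cell_of_mem_cellSet hx]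

lemma cellShift_mem_cellSet (π : Equiv.Perm (Fin N)) {x : ℝ} {i : Fin N}
    (hx : x ∈ cellSet N i) : cellShift π x ∈ cellSet N (π i) := by
  rw [cellShift_of_mem_cellSet π hx]
  rwa [cellSet_eq_preimage_add i (π i)] at hx

lemma cellShift_symm_cellShift (π : Equiv.Perm (Fin N)) (x : ℝ) :
    cellShift π.symm (cellShift π x) = x := by
  by_cases hx : x ∈ Ico (0 : ℝ) 1
  · have hcell := mem_cellSet_cell (N := N) hx
    rw [cellShift_of_mem_cellSet _ (cellShift_mem_cellSet π hcell),
      cellShift_of_mem_cellSet π hcell, Equiv.symm_apply_apply]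
    ring
  · simp only [cellShift, if_neg hx]

lemma measurable_cellShift (π : Equiv.Perm (Fin N)) : Measurable (cellShift π) :=
  .ite measurableSet_Ico (measurable_id.add ((measurable_from_top
    (f := fun i : Fin N => ((π i : ℝ) - (i : ℝ)) / N)).comp measurable_cell)) measurable_id

/-- The interval exchange of `[0, 1)` that permutes the intervals `[i/N, (i+1)/N)` by `π`. -/
def cellPerm (π : Equiv.Perm (Fin N)) : ℝ ≃ᵐ ℝ where
  toFun := cellShift π
  invFun := cellShift π.symm
  left_inv := cellShift_symm_cellShift π
  right_inv := cellShift_symm_cellShift π.symm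
  measurable_toFun := measurable_cellShift π
  measurable_invFun := measurable_cellShift π.symm

lemma cell_cellPerm (π : Equiv.Perm (Fin N)) {x : ℝ} (hx : x ∈ Ico (0 : ℝ) 1) :
    cell N (cellPerm π x) = π (cell N x) :=
  cell_of_mem_cellSet (cellShift_mem_cellSet π (mem_cellSet_cell hx))

lemma mapsTo_cellPerm (π : Equiv.Perm (Fin N)) : MapsTo (cellPerm π) I01 I01 := fun x hx => by
  by_cases h : x ∈ Ico (0 : ℝ) 1
  · exact Ico_subset_Icc_self
      (cellSet_subset_Ico _ (cellShift_mem_cellSet π (mem_cellSet_cell h)))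
  · have fixed : cellPerm π x = x := if_neg h
    rwa [fixed]

lemma map_cellPerm_restrict_cellSet (π : Equiv.Perm (Fin N)) (i : Fin N) :
    (volume.restrict (cellSet N i)).map (cellPerm π) = volume.restrict (cellSet N (π i)) := by
  have translation : cellPerm π =ᵐ[volume.restrict (cellSet N i)]
      fun x => x + ((π i : ℝ) - (i : ℝ)) / N := by
    filter_upwards [ae_restrict_mem (s := cellSet N i) measurableSet_Ico] with x hx
    exact cellShift_of_mem_cellSet π hx
  rw [Measure.map_congr translation, cellSet_eq_preimage_add i (π i)]
  exact ((measurePreserving_add_right volume _).restrict_preimage measurableSet_Ico).map_eq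

lemma measurePreserving_cellPerm (π : Equiv.Perm (Fin N)) :
    MeasurePreserving (cellPerm π) mu01 mu01 := by
  refine ⟨(cellPerm π).measurable, ?_⟩
  rw [mu01_eq_sum_restrict_cellSet N, Measure.map_sum (cellPerm π).measurable.aemeasurable]
  simp only [map_cellPerm_restrict_cellSet]
  exact Measure.sum_comp_equiv π fun i => volume.restrict (cellSet N i)

lemma isMPB_cellPerm (π : Equiv.Perm (Fin N)) : IsMPB (cellPerm π) :=
  ⟨(cellPerm π).measurable, InvOn.bijOn (f' := cellPerm π.symm)
    ⟨fun x _ => (cellPerm π).left_inv x, fun x _ => (cellPerm π).right_inv x⟩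
    (mapsTo_cellPerm π) (mapsTo_cellPerm π.symm), measurePreserving_cellPerm π⟩

lemma cutNorm_comp_cell_le {A : Fin N → Fin N → ℝ} {ε : ℝ} (hA : CutLe A ε) :
    cutNorm (fun x y => A (cell N x) (cell N y)) ≤ ε := by
  have hN : (N : ℝ) ≠ 0 := NeZero.ne _
  refine cutNorm_le fun P Q _ _ => ?_
  have abs_mass_le (Q : Set ℝ) (j : Fin N) :
      |(N : ℝ) * (mu01.restrict Q).real (cell N ⁻¹' {j})| ≤ 1 := by
    rw [abs_of_nonneg (by positivity)]
    calc (N : ℝ) * (mu01.restrict Q).real (cell N ⁻¹' {j})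
        ≤ N * mu01.real (cell N ⁻¹' {j}) := by
          gcongr
          exact ENNReal.toReal_mono (measure_ne_top _ _) (Measure.restrict_apply_le _ _)
      _ = 1 := by rw [mu01_real_cell, mul_inv_cancel₀ hN]
  have rewrite_integral := integral_comp_cell (mu01.restrict P) fun i =>
    𝔼 j, N * (mu01.restrict Q).real (cell N ⁻¹' {j}) * A i j
  simp only [integral_comp_cell]
  rw [rewrite_integral]
  simpa only [Finset.mul_expect, mul_assoc] using hA _ _ (abs_mass_le P) (abs_mass_le Q)

lemma mu01_comp_cell_ne_eq_disagreement {Q : Type*} [DecidableEq Q] (p q : Fin N → Q) :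
    mu01.real {t | p (cell N t) ≠ q (cell N t)} = disagreement p q := by
  have measurable : MeasurableSet {t | p (cell N t) ≠ q (cell N t)} :=
    measurable_cell (MeasurableSet.of_discrete (s := {i | p i ≠ q i}))
  rw [disagreement, ← integral_comp_cell_mu01, ← integral_indicator_one measurable]
  refine integral_congr_ae (Eventually.of_forall fun t => ?_)
  simp [indicator]

end Cells

namespace WGraph

variable {S : Type*} {N : ℕ} [NeZero N]

/-- The step graphon of a weighted colored graph. -/
def step (G : WGraph (Fin N) S) : CGraphon S where
  K :=
    { W := fun x y => G.w (cell N x) (cell N y)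
      measurable := (measurable_of_countable (Function.uncurry G.w)).comp
        (measurable_cell.prodMap measurable_cell)
      symm := fun _ _ => G.symm _ _
      nonneg := fun _ _ => (G.mem_Icc _ _).1
      le_one := fun _ _ => (G.mem_Icc _ _).2 }
  c := G.c ∘ cell N
  measC s := measurable_cell (MeasurableSet.of_discrete (s := G.c ⁻¹' {s}))

variable [DecidableEq S]

lemma hom_step {V : Type*} [Fintype V] [DecidableEq V] (G : WGraph (Fin N) S)
    (T : Finset (Sym2 V)) (cT : V → S) :
    G.step.hom T cT = G.hom T cT := by
  have edge_step (x : V → ℝ) (e : Sym2 V) : G.step.K.edge x e = G.edge (cell N ∘ x) e := by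
    induction e with
    | _ u v => rfl
  rw [hom, ← integral_pi_comp_cell, CGraphon.hom]
  simp only [edge_step]
  rfl

lemma Close.exists_cutDist_step_le [Fintype S] {G G' : WGraph (Fin N) S} {ε : ℝ}
    (h : G.Close G' ε) :
    ∃ π : Equiv.Perm (Fin N),
      G.step.cutDist (G'.step.comp (cellPerm π).measurable) ≤ 3 * ε := by
  obtain ⟨π, hw, hc⟩ := h.symm
  refine ⟨π, ?_⟩
  have kernel : cutNorm (fun x y => G.step.K.W x y -
      (G'.step.comp (cellPerm π).measurable).K.W x y) ≤ ε := by
    refine le_of_eq_of_le (cutNorm_congr_ae ?_) (cutNorm_comp_cell_le hw.neg)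
    filter_upwards [ae_mem_Ico] with x hx
    filter_upwards [ae_mem_Ico] with y hy
    simp only [step, CGraphon.comp, cell_cellPerm π hx, cell_cellPerm π hy, neg_sub]
  have color : mu01.real {t | G.step.c t ≠
      (G'.step.comp (cellPerm π).measurable).c t} ≤ ε := by
    rw [disagreement_comm] at hc
    refine le_of_eq_of_le (measureReal_congr ?_)
      ((mu01_comp_cell_ne_eq_disagreement G.c (G'.c ∘ π)).trans_le hc)
    filter_upwards [ae_mem_Ico] with t ht
    simp only [step, CGraphon.comp, eq_iff_iff]
    change (_ ≠ _) ↔ (_ ≠ _)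
    simp only [Function.comp_apply, cell_cellPerm π ht]
  have := colorDist_le_two_mul_mu01_ne G.step.measC
    (G'.step.comp (cellPerm π).measurable).measC
  unfold CGraphon.cutDist
  linarith

end WGraph

/-! ### Approximation by step graphons -/

section Approximation

variable {η : ℝ}

lemma exists_integral_abs_sub_comp_le {α : Type*} [MetricSpace α] [ProperSpace α]
    [MeasurableSpace α] [BorelSpace α] {μ : Measure α} [IsProbabilityMeasure μ] {f : α → ℝ}
    (hf : Integrable f μ) (hη : 0 < η) :
    ∃ g : α → ℝ, ∃ δ > 0, ∀ q : α → α, (∀ᵐ x ∂μ, dist x (q x) < δ) →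
      ∫ x, |f x - g (q x)| ∂μ ≤ η := by
  obtain ⟨g, compact_support, close, continuous, integrable⟩ :=
    hf.exists_hasCompactSupport_integral_sub_le (half_pos hη)
  obtain ⟨δ, hδ, modulus⟩ := Metric.uniformContinuous_iff.1
    (continuous.uniformContinuous_of_tendsto_cocompact compact_support.is_zero_at_infty)
    (η / 2) (half_pos hη)
  refine ⟨g, δ, hδ, fun q hq => ?_⟩
  have integrable_error : Integrable (fun x => |f x - g x|) μ := (hf.sub integrable).abs
  calc ∫ x, |f x - g (q x)| ∂μ
      ≤ ∫ x, (|f x - g x| + η / 2) ∂μ := by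
        refine integral_mono_of_nonneg (Eventually.of_forall fun x => abs_nonneg _)
          (integrable_error.add (integrable_const _)) ?_
        filter_upwards [hq] with x hx
        have sample_error : |g x - g (q x)| < η / 2 := modulus hx
        linarith [abs_sub_le (f x) (g x) (g (q x))]
    _ = (∫ x, |f x - g x| ∂μ) + η / 2 := by
        rw [integral_add integrable_error (integrable_const _), integral_const, probReal_univ,
          one_smul]
    _ ≤ η := by
        simp only [Real.norm_eq_abs] at close
        linarith

lemma eventually_ae_dist_cell_div_lt {δ : ℝ} (hδ : 0 < δ) :
    ∀ᶠ N : ℕ in atTop, ∀ [NeZero N], ∀ᵐ x ∂mu01, dist x ((cell N x : ℝ) / N) < δ := by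
  filter_upwards [tendsto_one_div_atTop_nhds_zero_nat.eventually_lt_const hδ] with N hN _
  filter_upwards [ae_mem_Ico] with x hx
  have ⟨lower, upper⟩ := mem_cellSet_cell (N := N) hx
  rw [add_div] at upper
  rw [Real.dist_eq, abs_of_nonneg (sub_nonneg.2 lower)]
  linarith

lemma eventually_exists_integral_abs_sub_comp_cell_le {f : ℝ → ℝ} (hf : Integrable f mu01)
    (hη : 0 < η) :
    ∀ᶠ N : ℕ in atTop, ∀ [NeZero N], ∃ h : Fin N → ℝ, ∫ t, |f t - h (cell N t)| ∂mu01 ≤ η := by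
  obtain ⟨g, δ, hδ, approx⟩ := exists_integral_abs_sub_comp_le hf hη
  filter_upwards [eventually_ae_dist_cell_div_lt hδ] with N hN _
  exact ⟨fun i => g ((i : ℝ) / N), approx _ hN⟩

lemma eventually_exists_integral_abs_sub_comp_cell_cell_le {f : ℝ × ℝ → ℝ}
    (hf : Integrable f (mu01.prod mu01)) (hη : 0 < η) :
    ∀ᶠ N : ℕ in atTop, ∀ [NeZero N], ∃ h : Fin N → Fin N → ℝ,
      ∫ p, |f p - h (cell N p.1) (cell N p.2)| ∂(mu01.prod mu01) ≤ η := by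
  obtain ⟨g, δ, hδ, approx⟩ := exists_integral_abs_sub_comp_le hf hη
  filter_upwards [eventually_ae_dist_cell_div_lt hδ] with N hN _
  refine ⟨fun i j => g ((i : ℝ) / N, (j : ℝ) / N),
    approx (fun p => ((cell N p.1 : ℝ) / N, (cell N p.2 : ℝ) / N)) ?_⟩
  filter_upwards [Measure.quasiMeasurePreserving_fst.ae hN,
    Measure.quasiMeasurePreserving_snd.ae hN] with p fst_lt snd_lt
  exact max_lt fst_lt snd_lt

lemma integrable_sub_comp_cell_cell {N : ℕ} [NeZero N] {f : ℝ × ℝ → ℝ}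
    (hf : Integrable f (mu01.prod mu01)) (h : Fin N → Fin N → ℝ) :
    Integrable (fun p => f p - h (cell N p.1) (cell N p.2)) (mu01.prod mu01) :=
  hf.sub ((Integrable.of_finite (f := Function.uncurry h)).comp_measurable
    (measurable_cell.prodMap measurable_cell))

/-- The symmetrization of a matrix, with entries truncated to `[0, 1]`. -/
def symmClamp {ι : Type*} (h : ι → ι → ℝ) (i j : ι) : ℝ :=
  projIcc (0 : ℝ) 1 zero_le_one ((h i j + h j i) / 2)

lemma Graphon.integral_abs_sub_symmClamp_le (W : Graphon) {N : ℕ} [NeZero N]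
    (h : Fin N → Fin N → ℝ) :
    ∫ p, |W.W p.1 p.2 - symmClamp h (cell N p.1) (cell N p.2)| ∂(mu01.prod mu01) ≤
      ∫ p, |W.W p.1 p.2 - h (cell N p.1) (cell N p.2)| ∂(mu01.prod mu01) := by
  set error : ℝ × ℝ → ℝ := fun p => |W.W p.1 p.2 - h (cell N p.1) (cell N p.2)|
  have integrable : Integrable error (mu01.prod mu01) :=
    (integrable_sub_comp_cell_cell (W.isTestFun_uncurry.integrable _) h).abs
  have pointwise (p : ℝ × ℝ) :
      |W.W p.1 p.2 - symmClamp h (cell N p.1) (cell N p.2)| ≤ (error p + error p.swap) / 2 := by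
    refine (abs_sub_projIcc_le zero_le_one ⟨W.nonneg _ _, W.le_one _ _⟩ _).trans ?_
    have average : W.W p.1 p.2 - (h (cell N p.1) (cell N p.2) + h (cell N p.2) (cell N p.1)) / 2 =
        ((W.W p.1 p.2 - h (cell N p.1) (cell N p.2)) +
          (W.W p.2 p.1 - h (cell N p.2) (cell N p.1))) / 2 := by
      rw [W.symm p.2 p.1]
      ring
    rw [average, abs_div, abs_two]
    gcongr
    exact abs_add_le _ _
  calc ∫ p, |W.W p.1 p.2 - symmClamp h (cell N p.1) (cell N p.2)| ∂(mu01.prod mu01)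
      ≤ ∫ p, (error p + error p.swap) / 2 ∂(mu01.prod mu01) :=
        integral_mono_of_nonneg (Eventually.of_forall fun p => abs_nonneg _)
          ((integrable.add integrable.swap).div_const 2) (Eventually.of_forall pointwise)
    _ = ((∫ p, error p ∂(mu01.prod mu01)) + ∫ p, error p.swap ∂(mu01.prod mu01)) / 2 := by
        rw [integral_div]
        exact congrArg (· / 2) (integral_add integrable integrable.swap)
    _ = ∫ p, error p ∂(mu01.prod mu01) := by
        rw [integral_prod_swap error]
        ring

variable {S : Type*}

-- The maximizing color scores at least as much as the true one, so the errors in these two colors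
-- alone add up to at least `1`.
lemma one_le_sum_abs_ite_sub_of_forall_le [Fintype S] [DecidableEq S] {p : S → ℝ} {s d : S}
    (hd : ∀ s', p s' ≤ p d) (hs : s ≠ d) : 1 ≤ ∑ s', |(if s = s' then 1 else 0) - p s'| := by
  calc 1 ≤ |1 - p s| + |0 - p d| := by
        linarith [hd s, le_abs_self (1 - p s), neg_le_abs (0 - p d)]
    _ = ∑ s' ∈ {s, d}, |(if s = s' then 1 else 0) - p s'| := by
        rw [Finset.sum_pair hs, if_pos rfl, if_neg hs]
    _ ≤ ∑ s', |(if s = s' then 1 else 0) - p s'| :=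
        Finset.sum_le_sum_of_subset_of_nonneg (Finset.subset_univ _) fun _ _ _ => abs_nonneg _

lemma integrable_ite_color [DecidableEq S] {c : ℝ → S} (hc : ∀ s, MeasurableSet (c ⁻¹' {s}))
    (s : S) : Integrable (fun t => if c t = s then (1 : ℝ) else 0) mu01 :=
  integrable_of_mem_Icc (.ite (hc s) measurable_const measurable_const) fun t => by
    split_ifs <;> simp

lemma mu01_ne_comp_cell_le_sum_integral [Fintype S] [DecidableEq S] {c : ℝ → S}
    (hc : ∀ s, MeasurableSet (c ⁻¹' {s})) {N : ℕ} [NeZero N] {h : S → Fin N → ℝ} {d : Fin N → S}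
    (hd : ∀ i s, h s i ≤ h (d i) i) :
    mu01.real {t | c t ≠ d (cell N t)} ≤
      ∑ s, ∫ t, |(if c t = s then 1 else 0) - h s (cell N t)| ∂mu01 := by
  have integrable_error (s : S) :
      Integrable (fun t => |(if c t = s then (1 : ℝ) else 0) - h s (cell N t)|) mu01 :=
    ((integrable_ite_color hc s).sub
      ((Integrable.of_finite (f := h s)).comp_measurable measurable_cell)).abs
  have measurable_d (s : S) : MeasurableSet ((d ∘ cell N) ⁻¹' {s}) :=
    measurable_cell (MeasurableSet.of_discrete (s := d ⁻¹' {s}))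
  calc mu01.real {t | c t ≠ d (cell N t)}
      = ∫ t, {t | c t ≠ d (cell N t)}.indicator 1 t ∂mu01 :=
        (integral_indicator_one (measurableSet_ne hc measurable_d)).symm
    _ ≤ ∫ t, ∑ s, |(if c t = s then 1 else 0) - h s (cell N t)| ∂mu01 := by
        refine integral_mono_of_nonneg (Eventually.of_forall fun t =>
          indicator_nonneg (fun _ _ => zero_le_one) _)
          (integrable_finsetSum _ fun s _ => integrable_error s) (Eventually.of_forall fun t => ?_)
        exact indicator_apply_le' (fun ht => one_le_sum_abs_ite_sub_of_forall_le (hd _) ht)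
          fun _ => Finset.sum_nonneg fun _ _ => abs_nonneg _
    _ = ∑ s, ∫ t, |(if c t = s then 1 else 0) - h s (cell N t)| ∂mu01 :=
        integral_finsetSum _ fun s _ => integrable_error s

lemma eventually_exists_mu01_ne_comp_cell_le [Finite S] {c : ℝ → S}
    (hc : ∀ s, MeasurableSet (c ⁻¹' {s})) (hη : 0 < η) :
    ∀ᶠ N : ℕ in atTop, ∀ [NeZero N], ∃ d : Fin N → S,
      mu01.real {t | c t ≠ d (cell N t)} ≤ η := by
  classical
  have := Fintype.ofFinite S
  have : Nonempty S := ⟨c 0⟩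
  have hcard : (0 : ℝ) < Fintype.card S := mod_cast Fintype.card_pos
  filter_upwards [eventually_all.2 fun s => eventually_exists_integral_abs_sub_comp_cell_le
    (integrable_ite_color hc s) (div_pos hη hcard)] with N approx _
  choose h hh using fun s => approx s
  choose d hd using fun i : Fin N => Finite.exists_max fun s => h s i
  refine ⟨d, ?_⟩
  calc mu01.real {t | c t ≠ d (cell N t)}
      ≤ ∑ s, ∫ t, |(if c t = s then 1 else 0) - h s (cell N t)| ∂mu01 :=
        mu01_ne_comp_cell_le_sum_integral hc hd
    _ ≤ ∑ _s : S, η / Fintype.card S := Finset.sum_le_sum fun s _ => hh s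
    _ = η := by
        rw [Finset.sum_const, Finset.card_univ, nsmul_eq_mul, mul_div_cancel₀ _ hcard.ne']

lemma CGraphon.eventually_exists_cutDist_step_le [Fintype S] (W : CGraphon S) (hη : 0 < η) :
    ∀ᶠ N : ℕ in atTop, ∀ [NeZero N], ∃ G : WGraph (Fin N) S, W.cutDist G.step ≤ η := by
  filter_upwards [eventually_exists_integral_abs_sub_comp_cell_cell_le
      (W.K.isTestFun_uncurry.integrable _) (half_pos hη),
    eventually_exists_mu01_ne_comp_cell_le W.measC (show 0 < η / 4 by positivity)]
    with N kernel color _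
  obtain ⟨h, hh⟩ := kernel
  obtain ⟨d, hd⟩ := color
  let G : WGraph (Fin N) S :=
    { w := symmClamp h
      symm := fun i j => by simp only [symmClamp, add_comm]
      mem_Icc := fun i j => (projIcc (0 : ℝ) 1 zero_le_one _).2
      c := d }
  refine ⟨G, ?_⟩
  have cut_le : cutNorm (fun x y => W.K.W x y - G.step.K.W x y) ≤ η / 2 :=
    (cutNorm_le_integral_abs (W.K.integrable_sub G.step.K)).trans
      ((W.K.integral_abs_sub_symmClamp_le h).trans hh)
  have color_le := colorDist_le_two_mul_mu01_ne W.measC G.step.measC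
  have ne_le : mu01.real {t | W.c t ≠ G.step.c t} ≤ η / 4 := hd
  unfold CGraphon.cutDist
  linarith

end Approximation

/-! ### The inverse counting lemma -/

namespace CGraphon

variable {S : Type*} [DecidableEq S] (W W' : CGraphon S)

lemma tS_eq_hom_of_edgeSet_eq {V : Type} [Fintype V] [DecidableEq V] {H : SimpleGraph V}
    [DecidableRel H.Adj] {T : Finset (Sym2 V)} (h : H.edgeSet = T) (cH : V → S) :
    tS H cH W = W.hom T cH := by
  rw [tS_eq_hom, Finset.coe_injective ((SimpleGraph.coe_edgeFinset H).trans h)]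

lemma tS_fromEdgeSet {V : Type} [Fintype V] [DecidableEq V] {T : Finset (Sym2 V)}
    (hT : T ⊆ allEdges V) (cT : V → S)
    [DecidableRel (SimpleGraph.fromEdgeSet (T : Set (Sym2 V))).Adj] :
    tS (SimpleGraph.fromEdgeSet (T : Set (Sym2 V))) cT W = W.hom T cT := by
  refine W.tS_eq_hom_of_edgeSet_eq ?_ cT
  rw [SimpleGraph.edgeSet_fromEdgeSet, sdiff_eq_left, Set.disjoint_left]
  exact fun e he => SimpleGraph.not_isDiag_of_mem_edgeFinset (hT he)

variable [Fintype S]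

lemma deltaCutS_le_of_close {N : ℕ} [NeZero N] {G G' : WGraph (Fin N) S} {ε : ℝ}
    (h : G.Close G' ε) :
    deltaCutS W W' ≤ W.cutDist G.step + 3 * ε + W'.cutDist G'.step := by
  obtain ⟨π, hπ⟩ := h.exists_cutDist_step_le
  have hσ := measurePreserving_cellPerm π
  calc deltaCutS W W' ≤ W.cutDist (W'.comp hσ.measurable) :=
        W.deltaCutS_le_cutDist W' (isMPB_cellPerm π)
    _ ≤ W.cutDist G.step + (G.step.cutDist (G'.step.comp hσ.measurable) +
          (G'.step.comp hσ.measurable).cutDist (W'.comp hσ.measurable)) :=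
        (W.cutDist_triangle G.step _).trans
          (add_le_add le_rfl (G.step.cutDist_triangle (G'.step.comp hσ.measurable) _))
    _ ≤ W.cutDist G.step + (3 * ε + G'.step.cutDist W') := by
        gcongr
        exact G'.step.cutDist_comp_le W' hσ
    _ = W.cutDist G.step + 3 * ε + W'.cutDist G'.step := by
        rw [G'.step.cutDist_comm W', add_assoc]

lemma abs_hom_sub_hom_le_of_cutDist_step_le {V : Type*} [Fintype V] [DecidableEq V] {N : ℕ}
    [NeZero N] {G : WGraph (Fin N) S} {η : ℝ} (h : W.cutDist G.step ≤ η) {T : Finset (Sym2 V)}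
    (hT : T ⊆ allEdges V) (cT : V → S) :
    |W.hom T cT - G.hom T cT| ≤ ((allEdges V).card + Fintype.card V) * η := by
  rw [← G.hom_step]
  have := W.cutDist_nonneg G.step
  refine (W.abs_hom_sub_le G.step
    (fun e he => SimpleGraph.not_isDiag_of_mem_edgeFinset (hT he)) cT).trans ?_
  gcongr

theorem inverse_counting (S : Type*) [Fintype S] [DecidableEq S] {ε : ℝ} (hε : 0 < ε) :
    ∃ k : ℕ, ∃ δ > 0, ∀ W W' : CGraphon S,
      (∀ T ⊆ allEdges (Fin k), ∀ cT : Fin k → S, |W.hom T cT - W'.hom T cT| ≤ δ) →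
        deltaCutS W W' < ε := by
  obtain ⟨k, hk, δ, hδ, finite⟩ := WGraph.finite_inverse_counting S (ε := ε / 6) (by positivity)
  refine ⟨k, δ / 2, half_pos hδ, fun W W' hom_close => ?_⟩
  obtain ⟨η, hη, counting_error⟩ := exists_pos_mul_lt (show 0 < δ / 4 by positivity)
    ((allEdges (Fin k)).card + Fintype.card (Fin k) : ℝ)
  have hmin : 0 < min η (ε / 8) := lt_min hη (by positivity)
  obtain ⟨M, approx⟩ := eventually_atTop.1 ((W.eventually_exists_cutDist_step_le hmin).and
    (W'.eventually_exists_cutDist_step_le hmin))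
  have : NeZero (k * (M + 1)) := ⟨by positivity⟩
  obtain ⟨approx, approx'⟩ := approx (k * (M + 1)) (by nlinarith)
  obtain ⟨G, hG⟩ := approx
  obtain ⟨G', hG'⟩ := approx'
  have close : G.Close G' (ε / 6) := finite (M + 1) M.succ_pos G G' fun T hT cT => by
    have hom_G := W.abs_hom_sub_hom_le_of_cutDist_step_le (hG.trans (min_le_left _ _)) hT cT
    have hom_G' := W'.abs_hom_sub_hom_le_of_cutDist_step_le (hG'.trans (min_le_left _ _)) hT cT
    rw [abs_sub_comm] at hom_G
    linarith [abs_sub_le (G.hom T cT) (W.hom T cT) (G'.hom T cT),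
      abs_sub_le (W.hom T cT) (W'.hom T cT) (G'.hom T cT), hom_close T hT cT]
  linarith [W.deltaCutS_le_of_close W' close, hG.trans (min_le_right _ _),
    hG'.trans (min_le_right _ _)]

end CGraphon

theorem cauchy_of_left_convergence {S : Type*} [Fintype S] [DecidableEq S] {W : ℕ → CGraphon S}
    (hW : ∀ (V : Type) [Fintype V] [DecidableEq V]
        (H : SimpleGraph V) [DecidableRel H.Adj] (cH : V → S),
        ∃ L : ℝ, Tendsto (fun n => tS H cH (W n)) atTop (nhds L)) {ε : ℝ} (hε : 0 < ε) :
    ∃ N : ℕ, ∀ m ≥ N, ∀ n ≥ N, deltaCutS (W m) (W n) < ε := by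
  classical
  obtain ⟨k, δ, hδ, inverse⟩ := CGraphon.inverse_counting S hε
  let densities (n : ℕ) (p : Finset (Sym2 (Fin k)) × (Fin k → S)) : ℝ :=
    tS (SimpleGraph.fromEdgeSet (p.1 : Set (Sym2 (Fin k)))) p.2 (W n)
  choose L hL using fun p : Finset (Sym2 (Fin k)) × (Fin k → S) =>
    hW (Fin k) (SimpleGraph.fromEdgeSet (p.1 : Set (Sym2 (Fin k)))) p.2
  have cauchy : CauchySeq densities := (tendsto_pi_nhds.2 hL).cauchySeq
  obtain ⟨N, hN⟩ := Metric.cauchySeq_iff.1 cauchy δ hδ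
  refine ⟨N, fun m hm n hn => inverse _ _ fun T hT cT => ?_⟩
  rw [← (W m).tS_fromEdgeSet hT cT, ← (W n).tS_fromEdgeSet hT cT]
  exact (dist_le_pi_dist (densities m) (densities n) (T, cT)).trans (hN m hm n hn).le

/-- **Left-convergence is equivalent to being Cauchy in the colored cut distance.**
A sequence of `S`-colored graphons left-converges (all colored homomorphism densities
converge) if and only if it is a Cauchy sequence for `δ_□^S`. -/
theorem colored_left_convergence_iff_cauchy
    {S : Type} [Fintype S] [DecidableEq S] (W : ℕ → CGraphon S) :
    (∀ (V : Type) [Fintype V] [DecidableEq V]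
        (H : SimpleGraph V) [DecidableRel H.Adj] (cH : V → S),
        ∃ L : ℝ, Tendsto (fun n => tS H cH (W n)) atTop (nhds L)) ↔
    (∀ ε : ℝ, 0 < ε → ∃ N : ℕ, ∀ m ≥ N, ∀ n ≥ N, deltaCutS (W m) (W n) < ε) := by
  exact ⟨fun hW _ hε => cauchy_of_left_convergence hW hε,
    fun hW _ _ _ H _ cH => left_convergence_of_cauchy hW H cH⟩

end
end

section
/- Let (W_n)_{n≥1} be graphons and W_0 a graphon with ‖W_n − W_0‖_□ → 0 as n → ∞. Then ‖L_{W_n} − L_{W_0}‖_{∞→1} → 0 as n → ∞, where L_W := M_{d_W} − T_W is the (unnormalized) Laplacian. In particular, the degree functions satisfy ‖d_{W_n} − d_{W_0}‖_{L¹([0,1])} ≤ 4 ‖W_n − W_0‖_□ → 0. -/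
/-!
Write `U = Wₙ − W₀` and `c = ‖U‖_□`. Splitting the space according to the sign of `k` shows that
`∫ |k| ≤ 2c` as soon as `|∫_B k| ≤ c` for every measurable `B`. For fixed `A` this applies to
`k(y) = ∫_A U(x,y) dx`, whose integral over `B` is the cut integral over `A × B`; so by Fubini
`|∫_A T_U f| = |∫ f k| ≤ 2c` whenever `|f| ≤ 1`. Applying the observation again, now to `T_U f`,
gives `‖T_U f‖₁ ≤ 4c`.

Taking `f = 1` bounds the degree function of `U` by `4c` in `L¹`, so `L_U = M_{d_U} − T_U` has norm
at most `8c`, and `L_{Wₙ} − L_{W₀} = L_U` by linearity.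
-/

open MeasureTheory Set Filter

noncomputable section

/-- The degree function of a graphon: `d_W(x) = ∫₀¹ W(x,y) dy`. -/
def deg (V : Graphon) (x : ℝ) : ℝ := ∫ y in I01, V.W x y

/-- The (unnormalized) Laplacian `L_W = M_{d_W} − T_W` applied to a function `f`. -/
def lap (V : Graphon) (f : ℝ → ℝ) (x : ℝ) : ℝ :=
  deg V x * f x - ∫ y in I01, V.W x y * f y

/-- The `L^∞ → L¹` operator norm of a map `T` on functions:
`sup { ‖T f‖_{L¹[0,1]} : ‖f‖_∞ ≤ 1 }`. -/
def normInftyOne (T : (ℝ → ℝ) → ℝ → ℝ) : ℝ :=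
  sSup { r | ∃ f : ℝ → ℝ, Measurable f ∧ (∀ x, |f x| ≤ 1) ∧ r = ∫ x in I01, |T f x| }

section Kernel

variable {α β : Type*} [MeasurableSpace α] [MeasurableSpace β] {μ : Measure α} {ν : Measure β}
  {U V : α → β → ℝ} {f : β → ℝ} {C : ℝ}

/-- The cut norm of a kernel on a product of two measure spaces, as a supremum of iterated
integrals; it is meaningful for kernels integrable over the product measure, and `0` when the
supremum is infinite. -/
def kernelCutNorm (μ : Measure α) (ν : Measure β) (U : α → β → ℝ) : ℝ :=
  sSup { r | ∃ A B, MeasurableSet A ∧ MeasurableSet B ∧ r = |∫ x in A, ∫ y in B, U x y ∂ν ∂μ| }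

/-- The integral operator `T_U` of a kernel. -/
def kernelOperator (ν : Measure β) (U : α → β → ℝ) (f : β → ℝ) (x : α) : ℝ :=
  ∫ y, U x y * f y ∂ν

/-- The degree function `d_U = T_U 1` of a kernel. -/
def kernelDegree (ν : Measure β) (U : α → β → ℝ) (x : α) : ℝ :=
  ∫ y, U x y ∂ν

/-- The Laplacian `L_U = M_{d_U} − T_U` of a kernel on a single measure space. -/
def kernelLaplacian (μ : Measure α) (U : α → α → ℝ) (f : α → ℝ) (x : α) : ℝ :=
  kernelDegree μ U x * f x - kernelOperator μ U f x

/-- The `L^∞ → L¹` norm of a map on functions over a measure space, tested on measurable functions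
bounded by `1` everywhere; it is `0` when the supremum is infinite. -/
def opNormInftyOne (μ : Measure α) (T : (α → ℝ) → α → ℝ) : ℝ :=
  sSup { r | ∃ f : α → ℝ, Measurable f ∧ (∀ x, |f x| ≤ 1) ∧ r = ∫ x, |T f x| ∂μ }

lemma opNormInftyOne_nonneg (T : (α → ℝ) → α → ℝ) : 0 ≤ opNormInftyOne μ T := by
  refine Real.sSup_nonneg ?_
  rintro _ ⟨f, -, -, rfl⟩
  exact integral_nonneg fun x => abs_nonneg _

lemma opNormInftyOne_le {T : (α → ℝ) → α → ℝ} {c : ℝ}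
    (hT : ∀ f : α → ℝ, Measurable f → (∀ x, |f x| ≤ 1) → ∫ x, |T f x| ∂μ ≤ c) :
    opNormInftyOne μ T ≤ c := by
  refine csSup_le ⟨_, 0, measurable_zero, by simp, rfl⟩ ?_
  rintro _ ⟨f, hf, hf_le, rfl⟩
  exact hT f hf hf_le

lemma integral_abs_le_two_mul_of_abs_setIntegral_le {k : α → ℝ} {c : ℝ} (hk : Integrable k μ)
    (hc : ∀ s, MeasurableSet s → |∫ x in s, k x ∂μ| ≤ c) : ∫ x, |k x| ∂μ ≤ 2 * c := by
  have hc_null (s : Set α) (hs : NullMeasurableSet s μ) : |∫ x in s, k x ∂μ| ≤ c := by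
    obtain ⟨t, -, ht, hts⟩ := hs.exists_measurable_superset_ae_eq
    rw [← setIntegral_congr_set hts]
    exact hc t ht
  have hpos := hc_null {x | 0 ≤ k x} (nullMeasurableSet_le aemeasurable_const hk.aemeasurable)
  have hneg := hc_null {x | k x ≤ 0} (nullMeasurableSet_le hk.aemeasurable aemeasurable_const)
  calc ∫ x, |k x| ∂μ = ∫ x in {x | 0 ≤ k x}, k x ∂μ - ∫ x in {x | k x ≤ 0}, k x ∂μ :=
        integral_norm_eq_pos_sub_neg hk
    _ ≤ 2 * c := by linarith [(abs_le.mp hpos).2, (abs_le.mp hneg).1]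

lemma ae_abs_mul_le_abs {k g : α → ℝ} (hg_le : ∀ᵐ x ∂μ, |g x| ≤ 1) :
    ∀ᵐ x ∂μ, |k x * g x| ≤ |k x| := by
  filter_upwards [hg_le] with x hx
  rw [abs_mul]
  exact mul_le_of_le_one_right (abs_nonneg _) hx

lemma integrable_uncurry_mul (hU : Integrable (Function.uncurry U) (μ.prod ν))
    (hf : AEStronglyMeasurable f ν) (hf_le : ∀ᵐ y ∂ν, |f y| ≤ C) :
    Integrable (Function.uncurry fun x y => U x y * f y) (μ.prod ν) :=
  hU.mul_bdd hf.comp_snd (Measure.quasiMeasurePreserving_snd.ae hf_le)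

variable [SFinite ν]

lemma integrable_kernelDegree (hU : Integrable (Function.uncurry U) (μ.prod ν)) :
    Integrable (kernelDegree ν U) μ :=
  hU.integral_prod_left

lemma integrable_kernelOperator (hU : Integrable (Function.uncurry U) (μ.prod ν))
    (hf : AEStronglyMeasurable f ν) (hf_le : ∀ᵐ y ∂ν, |f y| ≤ C) :
    Integrable (kernelOperator ν U f) μ :=
  (integrable_uncurry_mul hU hf hf_le).integral_prod_left

variable [SFinite μ]

lemma integrable_prod_restrict {E : Type*} [NormedAddCommGroup E] {g : α × β → E}
    (hg : Integrable g (μ.prod ν)) (A : Set α) (B : Set β) :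
    Integrable g ((μ.restrict A).prod (ν.restrict B)) := by
  rw [Measure.prod_restrict]
  exact hg.restrict

lemma abs_setIntegral_setIntegral_le_kernelCutNorm
    (hU : Integrable (Function.uncurry U) (μ.prod ν)) {A : Set α} {B : Set β}
    (hA : MeasurableSet A) (hB : MeasurableSet B) :
    |∫ x in A, ∫ y in B, U x y ∂ν ∂μ| ≤ kernelCutNorm μ ν U := by
  refine le_csSup ⟨∫ z, |Function.uncurry U z| ∂μ.prod ν, ?_⟩ ⟨A, B, hA, hB, rfl⟩
  rintro _ ⟨A, B, -, -, rfl⟩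
  calc |∫ x in A, ∫ y in B, U x y ∂ν ∂μ|
      = |∫ z in A ×ˢ B, Function.uncurry U z ∂μ.prod ν| := by
        rw [setIntegral_prod _ hU.integrableOn]; rfl
    _ ≤ ∫ z in A ×ˢ B, |Function.uncurry U z| ∂μ.prod ν := abs_integral_le_integral_abs
    _ ≤ ∫ z, |Function.uncurry U z| ∂μ.prod ν :=
        setIntegral_le_integral hU.abs (ae_of_all _ fun z => abs_nonneg _)

lemma abs_setIntegral_kernelOperator_le (hU : Integrable (Function.uncurry U) (μ.prod ν))
    (hf : AEStronglyMeasurable f ν) (hf_le : ∀ᵐ y ∂ν, |f y| ≤ 1) {A : Set α}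
    (hA : MeasurableSet A) :
    |∫ x in A, kernelOperator ν U f x ∂μ| ≤ 2 * kernelCutNorm μ ν U := by
  have hUA : Integrable (Function.uncurry U) ((μ.restrict A).prod ν) := by
    simpa only [Measure.restrict_univ] using integrable_prod_restrict hU A univ
  have hk : Integrable (fun y => ∫ x in A, U x y ∂μ) ν := hUA.integral_prod_right
  calc |∫ x in A, kernelOperator ν U f x ∂μ|
      = |∫ y, (∫ x in A, U x y ∂μ) * f y ∂ν| := by
        simp only [kernelOperator]
        rw [integral_integral_swap (integrable_uncurry_mul hUA hf hf_le)]
        simp only [integral_mul_const]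
    _ ≤ ∫ y, |(∫ x in A, U x y ∂μ) * f y| ∂ν := abs_integral_le_integral_abs
    _ ≤ ∫ y, |∫ x in A, U x y ∂μ| ∂ν :=
        integral_mono_of_nonneg (ae_of_all _ fun y => abs_nonneg _) hk.abs
          (ae_abs_mul_le_abs hf_le)
    _ ≤ 2 * kernelCutNorm μ ν U := by
        refine integral_abs_le_two_mul_of_abs_setIntegral_le hk fun B hB => ?_
        rw [← integral_integral_swap (integrable_prod_restrict hU A B)]
        exact abs_setIntegral_setIntegral_le_kernelCutNorm hU hA hB

theorem integral_abs_kernelOperator_le (hU : Integrable (Function.uncurry U) (μ.prod ν))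
    (hf : AEStronglyMeasurable f ν) (hf_le : ∀ᵐ y ∂ν, |f y| ≤ 1) :
    ∫ x, |kernelOperator ν U f x| ∂μ ≤ 4 * kernelCutNorm μ ν U := by
  have h := integral_abs_le_two_mul_of_abs_setIntegral_le (integrable_kernelOperator hU hf hf_le)
    fun A hA => abs_setIntegral_kernelOperator_le hU hf hf_le hA
  linarith

theorem integral_abs_kernelDegree_le (hU : Integrable (Function.uncurry U) (μ.prod ν)) :
    ∫ x, |kernelDegree ν U x| ∂μ ≤ 4 * kernelCutNorm μ ν U := by
  simpa [kernelOperator, kernelDegree] using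
    integral_abs_kernelOperator_le hU (f := 1) aestronglyMeasurable_one (by simp)

lemma kernelDegree_sub_ae (hU : Integrable (Function.uncurry U) (μ.prod ν))
    (hV : Integrable (Function.uncurry V) (μ.prod ν)) :
    ∀ᵐ x ∂μ, kernelDegree ν (U - V) x = kernelDegree ν U x - kernelDegree ν V x := by
  filter_upwards [hU.prod_right_ae, hV.prod_right_ae] with x hUx hVx
  exact integral_sub hUx hVx

theorem integral_abs_kernelDegree_sub_le (hU : Integrable (Function.uncurry U) (μ.prod ν))
    (hV : Integrable (Function.uncurry V) (μ.prod ν)) :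
    ∫ x, |kernelDegree ν U x - kernelDegree ν V x| ∂μ ≤ 4 * kernelCutNorm μ ν (U - V) :=
  calc ∫ x, |kernelDegree ν U x - kernelDegree ν V x| ∂μ
      = ∫ x, |kernelDegree ν (U - V) x| ∂μ :=
        integral_congr_ae ((kernelDegree_sub_ae hU hV).mono fun x hx => by simp only [hx])
    _ ≤ 4 * kernelCutNorm μ ν (U - V) := integral_abs_kernelDegree_le (hU.sub hV)

lemma kernelOperator_sub_ae (hU : Integrable (Function.uncurry U) (μ.prod ν))
    (hV : Integrable (Function.uncurry V) (μ.prod ν)) (hf : AEStronglyMeasurable f ν)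
    (hf_le : ∀ᵐ y ∂ν, |f y| ≤ C) :
    ∀ᵐ x ∂μ, kernelOperator ν (U - V) f x = kernelOperator ν U f x - kernelOperator ν V f x := by
  filter_upwards [(integrable_uncurry_mul hU hf hf_le).prod_right_ae,
    (integrable_uncurry_mul hV hf hf_le).prod_right_ae] with x hUx hVx
  simp only [kernelOperator, Pi.sub_apply, sub_mul]
  exact integral_sub hUx hVx

end Kernel

section Laplacian

variable {α : Type*} [MeasurableSpace α] {μ : Measure α} [SFinite μ] {U V : α → α → ℝ}

lemma kernelLaplacian_sub_ae {f : α → ℝ} {C : ℝ}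
    (hU : Integrable (Function.uncurry U) (μ.prod μ))
    (hV : Integrable (Function.uncurry V) (μ.prod μ)) (hf : AEStronglyMeasurable f μ)
    (hf_le : ∀ᵐ y ∂μ, |f y| ≤ C) :
    ∀ᵐ x ∂μ, kernelLaplacian μ (U - V) f x = kernelLaplacian μ U f x - kernelLaplacian μ V f x := by
  filter_upwards [kernelDegree_sub_ae hU hV, kernelOperator_sub_ae hU hV hf hf_le] with x hdeg hop
  simp only [kernelLaplacian, hdeg, hop]
  ring

theorem integral_abs_kernelLaplacian_le {f : α → ℝ}
    (hU : Integrable (Function.uncurry U) (μ.prod μ)) (hf : AEStronglyMeasurable f μ)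
    (hf_le : ∀ᵐ y ∂μ, |f y| ≤ 1) :
    ∫ x, |kernelLaplacian μ U f x| ∂μ ≤ 8 * kernelCutNorm μ μ U := by
  have hdeg := (integrable_kernelDegree hU).abs
  have hop := (integrable_kernelOperator hU hf hf_le).abs
  calc ∫ x, |kernelLaplacian μ U f x| ∂μ
      ≤ ∫ x, (|kernelDegree μ U x| + |kernelOperator μ U f x|) ∂μ := by
        refine integral_mono_of_nonneg (ae_of_all _ fun x => abs_nonneg _) (hdeg.add hop) ?_
        filter_upwards [ae_abs_mul_le_abs (k := kernelDegree μ U) hf_le] with x hx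
        exact (abs_sub _ _).trans (add_le_add_left hx _)
    _ = ∫ x, |kernelDegree μ U x| ∂μ + ∫ x, |kernelOperator μ U f x| ∂μ := integral_add hdeg hop
    _ ≤ 8 * kernelCutNorm μ μ U := by
        linarith [integral_abs_kernelDegree_le hU, integral_abs_kernelOperator_le hU hf hf_le]

theorem opNormInftyOne_kernelLaplacian_sub_le
    (hU : Integrable (Function.uncurry U) (μ.prod μ))
    (hV : Integrable (Function.uncurry V) (μ.prod μ)) :
    opNormInftyOne μ (fun f x => kernelLaplacian μ U f x - kernelLaplacian μ V f x)
      ≤ 8 * kernelCutNorm μ μ (U - V) := by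
  refine opNormInftyOne_le fun f hf hf_le => ?_
  have hf' : AEStronglyMeasurable f μ := hf.aestronglyMeasurable
  have hf_ae : ∀ᵐ y ∂μ, |f y| ≤ 1 := ae_of_all _ hf_le
  calc ∫ x, |kernelLaplacian μ U f x - kernelLaplacian μ V f x| ∂μ
      = ∫ x, |kernelLaplacian μ (U - V) f x| ∂μ :=
        integral_congr_ae
          ((kernelLaplacian_sub_ae hU hV hf' hf_ae).mono fun x hx => by simp only [hx])
    _ ≤ 8 * kernelCutNorm μ μ (U - V) := integral_abs_kernelLaplacian_le (hU.sub hV) hf' hf_ae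

theorem laplacian_convergence_general {ι : Type*} {l : Filter ι} {W : ι → α → α → ℝ}
    (hW : ∀ i, Integrable (Function.uncurry (W i)) (μ.prod μ))
    (hV : Integrable (Function.uncurry V) (μ.prod μ))
    (hconv : Tendsto (fun i => kernelCutNorm μ μ (W i - V)) l (nhds 0)) :
    Tendsto (fun i => opNormInftyOne μ fun f x =>
      kernelLaplacian μ (W i) f x - kernelLaplacian μ V f x) l (nhds 0) ∧
    (∀ i, ∫ x, |kernelDegree μ (W i) x - kernelDegree μ V x| ∂μ
      ≤ 4 * kernelCutNorm μ μ (W i - V)) ∧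
    Tendsto (fun i => ∫ x, |kernelDegree μ (W i) x - kernelDegree μ V x| ∂μ) l (nhds 0) := by
  have hdeg := fun i => integral_abs_kernelDegree_sub_le (hW i) hV
  have hlap := fun i => opNormInftyOne_kernelLaplacian_sub_le (hW i) hV
  refine ⟨squeeze_zero (fun i => opNormInftyOne_nonneg _) hlap ?_, hdeg,
    squeeze_zero (fun i => integral_nonneg fun x => abs_nonneg _) hdeg ?_⟩
  · simpa using hconv.const_mul 8
  · simpa using hconv.const_mul 4

end Laplacian

instance isFiniteMeasure_restrict_I01 : IsFiniteMeasure (volume.restrict I01) :=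
  Real.isFiniteMeasure_restrict_Icc 0 1

lemma cutNorm_eq_kernelCutNorm (U : ℝ → ℝ → ℝ) :
    cutNorm U = kernelCutNorm (volume.restrict I01) (volume.restrict I01) U := by
  have hI : MeasurableSet I01 := measurableSet_Icc
  refine congrArg sSup (Set.ext fun r => ⟨?_, ?_⟩)
  · rintro ⟨A, B, hA, hB, hAI, hBI, rfl⟩
    exact ⟨A, B, hA, hB, by
      rw [Measure.restrict_restrict_of_subset hAI, Measure.restrict_restrict_of_subset hBI]⟩
  · rintro ⟨A, B, hA, hB, rfl⟩
    exact ⟨A ∩ I01, B ∩ I01, hA.inter hI, hB.inter hI, inter_subset_right, inter_subset_right, by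
      rw [Measure.restrict_restrict hA, Measure.restrict_restrict hB]⟩

lemma Graphon.integrable (V : Graphon) (μ : Measure (ℝ × ℝ)) [IsFiniteMeasure μ] :
    Integrable (Function.uncurry V.W) μ :=
  .of_bound V.measurable.aestronglyMeasurable 1 <| ae_of_all _ fun z =>
    (Real.norm_of_nonneg (V.nonneg z.1 z.2)).trans_le (V.le_one z.1 z.2)

/-- **Convergence of (unnormalized) Laplacians.** If `‖Wₙ − W₀‖_□ → 0` then
`‖L_{Wₙ} − L_{W₀}‖_{∞→1} → 0`; in particular the degree functions satisfy
`‖d_{Wₙ} − d_{W₀}‖_{L¹} ≤ 4 ‖Wₙ − W₀‖_□ → 0`. -/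
theorem laplacian_convergence
    (W : ℕ → Graphon)
    (hconv : Tendsto (fun n => cutNorm fun x y => (W n).W x y - (W 0).W x y)
      atTop (nhds 0)) :
    Tendsto (fun n => normInftyOne fun f x => lap (W n) f x - lap (W 0) f x)
      atTop (nhds 0) ∧
    (∀ n, (∫ x in I01, |deg (W n) x - deg (W 0) x|)
      ≤ 4 * cutNorm fun x y => (W n).W x y - (W 0).W x y) ∧
    Tendsto (fun n => ∫ x in I01, |deg (W n) x - deg (W 0) x|) atTop (nhds 0) := by
  simp only [cutNorm_eq_kernelCutNorm] at hconv ⊢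
  -- `deg`, `lap` and `normInftyOne` unfold to the kernel notions over `volume.restrict I01`.
  exact laplacian_convergence_general (fun n => (W n).integrable _) ((W 0).integrable _) hconv

end
end
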